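/- arXiv:2005.06451 — 2 statements merged into one kernel-verified Lean document; each statement's English description precedes it below -/
import Mathlib

section
/- (Theorem 3.4, Strong maximum principle in the critical case, heat-operator version) Let Ω ⊆ ℝ^N be a connected open set, T > 0, and let λ₀ : Ω × (0,T) → ℝ satisfy 0 < m ≤ λ₀ ≤ M. Let u : Ω × (0,T) → ℝ be a nonnegative continuous function such that at every point of Ω × (0,T) the spatial Hessian and the time derivative of u exist and Δu(x,t) − ∂_t u(x,t) = λ₀(x,t) u(x,t), where Δu denotes the trace of the spatial Hessian. If u(x₀,t₀) = 0 for some (x₀,t₀) ∈ Ω × (0,T), then u(x,t) = 0 for every x ∈ Ω and every t ∈ (0, t₀]. -/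
noncomputable section

open Set Metric MeasureTheory

/-- Euclidean space `ℝ^N`. -/
abbrev Euc (N : ℕ) := EuclideanSpace ℝ (Fin N)

/-- `s₊^q`: equals `(max s 0)^q` if `s > 0` and `0` otherwise. -/
def plusPowQ (q s : ℝ) : ℝ := if 0 < s then (max s 0) ^ q else 0

/-- The spatial gradient `∇u(x,t)`. -/
def spatialGrad (N : ℕ) (u : Euc N × ℝ → ℝ) (z : Euc N × ℝ) : Euc N :=
  gradient (fun y => u (y, z.2)) z.1

/-- The vector field `V(y,t) = ‖∇u(y,t)‖^(p-2) ∇u(y,t)`. -/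
def pVF (N : ℕ) (p : ℝ) (u : Euc N × ℝ → ℝ) (z : Euc N × ℝ) : Euc N :=
  ‖spatialGrad N u z‖ ^ (p - 2) • spatialGrad N u z

/-- The `p`-Laplacian `Δ_p u` realized as `trace (D_x V)` with `V = ‖∇u‖^(p-2)∇u`. -/
def pLap (N : ℕ) (p : ℝ) (u : Euc N × ℝ → ℝ) (z : Euc N × ℝ) : ℝ :=
  LinearMap.trace ℝ (Euc N) (fderiv ℝ (fun y => pVF N p u (y, z.2)) z.1).toLinearMap

/-- The time derivative `∂ₜ u`. -/
def timeDeriv (N : ℕ) (u : Euc N × ℝ → ℝ) (z : Euc N × ℝ) : ℝ :=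
  deriv (fun t => u (z.1, t)) z.2

/-- `u` is a classical solution of the dead-core equation `Δ_p u - ∂_t u = λ₀ u₊^q` on `D`:
`u` is continuous on `D` and at every point of `D` the spatial gradient and time derivative
exist, `V = ‖∇u‖^(p-2)∇u` is spatially differentiable, and the PDE holds. -/
def IsDCSol (N : ℕ) (p q : ℝ) (lam u : Euc N × ℝ → ℝ) (D : Set (Euc N × ℝ)) : Prop :=
  ContinuousOn u D ∧
  ∀ z ∈ D,
    DifferentiableAt ℝ (fun y => u (y, z.2)) z.1 ∧
    DifferentiableAt ℝ (fun t => u (z.1, t)) z.2 ∧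
    DifferentiableAt ℝ (fun y => pVF N p u (y, z.2)) z.1 ∧
    pLap N p u z - timeDeriv N u z = lam z * plusPowQ q (u z)

/-- The intrinsic scaling exponent `θ = p(1-q)/(p-1-q)`. -/
def thetaV (p q : ℝ) : ℝ := p * (1 - q) / (p - 1 - q)

/-- The intrinsic cylinder `Q_r(x₀,t₀) = B_r(x₀) × (t₀ - r^θ, t₀ + r^θ)`. -/
def cylQ (N : ℕ) (θ r : ℝ) (z0 : Euc N × ℝ) : Set (Euc N × ℝ) :=
  (ball z0.1 r) ×ˢ (Ioo (z0.2 - r ^ θ) (z0.2 + r ^ θ))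

/-- The lower cylinder `Q_r⁻(x₀,t₀) = B_r(x₀) × (t₀ - r^θ, t₀]`. -/
def cylQm (N : ℕ) (θ r : ℝ) (z0 : Euc N × ℝ) : Set (Euc N × ℝ) :=
  (ball z0.1 r) ×ˢ (Ioc (z0.2 - r ^ θ) z0.2)

/-- The upper cylinder `Q_r⁺(x₀,t₀) = B_r(x₀) × [t₀, t₀ + r^θ)`. -/
def cylQp (N : ℕ) (θ r : ℝ) (z0 : Euc N × ℝ) : Set (Euc N × ℝ) :=
  (ball z0.1 r) ×ˢ (Ico z0.2 (z0.2 + r ^ θ))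

/-- The parabolic boundary of `Q_r⁻(x₀,t₀)`:
`(closure(B_r) × {t₀ - r^θ}) ∪ (∂B_r × (t₀ - r^θ, t₀])`. -/
def parBdryQm (N : ℕ) (θ r : ℝ) (z0 : Euc N × ℝ) : Set (Euc N × ℝ) :=
  ((closedBall z0.1 r) ×ˢ ({z0.2 - r ^ θ} : Set ℝ)) ∪
    ((sphere z0.1 r) ×ˢ (Ioc (z0.2 - r ^ θ) z0.2))

/-- The class `𝔍 = 𝔍_p(λ₀,q)(Q₁)`: classical solutions `u` on `Q₁` (for some `λ₀` with
`m ≤ λ₀ ≤ M`) with `0 ≤ u ≤ 1`, `∂ₜ u ≥ 0` on `Q₁` and `u(0,0) = 0`. -/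
def memJ (N : ℕ) (p q m M : ℝ) (u : Euc N × ℝ → ℝ) : Prop :=
  ∃ lam : Euc N × ℝ → ℝ,
    (∀ z ∈ cylQ N (thetaV p q) 1 (0, 0), m ≤ lam z ∧ lam z ≤ M) ∧
    IsDCSol N p q lam u (cylQ N (thetaV p q) 1 (0, 0)) ∧
    (∀ z ∈ cylQ N (thetaV p q) 1 (0, 0), 0 ≤ u z ∧ u z ≤ 1) ∧
    (∀ z ∈ cylQ N (thetaV p q) 1 (0, 0), 0 ≤ timeDeriv N u z) ∧
    u (0, 0) = 0

/-- `S_r[u] = sup over Q_r⁻ of u` (cylinders centered at the origin). -/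
def Sr (N : ℕ) (p q r : ℝ) (u : Euc N × ℝ → ℝ) : ℝ :=
  sSup (u '' cylQm N (thetaV p q) r (0, 0))

open Topology Filter

lemma aux_second_deriv_nonneg (g g' : ℝ → ℝ) (c : ℝ)
    (h1 : ∀ᶠ h in 𝓝 (0:ℝ), HasDerivAt g (g' h) h) (h2 : HasDerivAt g' c 0)
    (hmin : IsLocalMin g 0) : 0 ≤ c := by
  by_contra hc
  push Not at hc
  have e1 : deriv g =ᶠ[𝓝 0] g' := h1.mono fun h hh => hh.deriv
  have e2 : deriv (deriv g) 0 = c := by rw [e1.deriv_eq]; exact h2.deriv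
  have hmax : IsLocalMax g 0 := isLocalMax_of_deriv_deriv_neg (by rw [e2]; exact hc)
    hmin.deriv_eq_zero h1.self_of_nhds.continuousAt
  have e3 : g =ᶠ[𝓝 0] fun _ => g 0 := by
    filter_upwards [hmin, hmax] with h a b using le_antisymm b a
  have e4 : deriv g =ᶠ[𝓝 0] fun _ => 0 := by
    have := e3.deriv
    simpa using this
  have : deriv (deriv g) 0 = 0 := by rw [e4.deriv_eq]; simp
  linarith

lemma aux_left_min (f : ℝ → ℝ) (f' a : ℝ) (hf : HasDerivAt f f' a)
    (hmin : ∀ᶠ t in 𝓝[<] a, f a ≤ f t) : f' ≤ 0 := by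
  have h := (hasDerivWithinAt_iff_tendsto_slope' (s := Iio a) (by simp)).1 hf.hasDerivWithinAt
  refine le_of_tendsto h ?_
  filter_upwards [hmin, self_mem_nhdsWithin] with t ht hta
  rw [slope_def_field]
  exact div_nonpos_of_nonneg_of_nonpos (by linarith) (by simp only [mem_Iio] at hta; linarith)

lemma aux_dir {N : ℕ} (f : Euc N → ℝ) (x e : Euc N)
    (h1 : ∀ᶠ y in 𝓝 x, DifferentiableAt ℝ f y)
    (h2 : DifferentiableAt ℝ (fun y => gradient f y) x) :
    (∀ᶠ h in 𝓝 (0:ℝ), HasDerivAt (fun h : ℝ => f (x + h • e))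
        (inner ℝ (gradient f (x + h • e)) e) h) ∧
    HasDerivAt (fun h : ℝ => inner ℝ (gradient f (x + h • e)) e)
      (inner ℝ e (fderiv ℝ (fun y => gradient f y) x e)) 0 := by
  have hl : ∀ h : ℝ, HasDerivAt (fun h : ℝ => x + h • e) e h := fun h => by
    simpa using ((hasDerivAt_id h).smul_const e).const_add x
  constructor
  · have : Tendsto (fun h : ℝ => x + h • e) (𝓝 0) (𝓝 x) := by
      simpa using (hl 0).continuousAt.tendsto
    filter_upwards [this.eventually h1] with h hh
    have := hh.hasGradientAt.hasFDerivAt.comp_hasDerivAt h (hl h)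
    rw [InnerProductSpace.toDual_apply_apply] at this
    exact this
  · have h3 : HasFDerivAt (fun y => gradient f y) (fderiv ℝ (fun y => gradient f y) x)
        (x + (0:ℝ) • e) := by simpa using h2.hasFDerivAt
    have h4 := h3.comp_hasDerivAt 0 (hl 0)
    have h5 := h4.inner ℝ (hasDerivAt_const (0:ℝ) e)
    simpa [real_inner_comm] using h5

lemma aux_W (C p b : ℝ) :
    (∀ h : ℝ, HasDerivAt (fun h : ℝ => C * (p - 2 * h * b - h ^ 2) ^ 2)
      (C * (2 * (p - 2 * h * b - h ^ 2) * (- 2 * b - 2 * h))) h) ∧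
    HasDerivAt (fun h : ℝ => C * (2 * (p - 2 * h * b - h ^ 2) * (- 2 * b - 2 * h)))
      (C * (8 * b ^ 2 - 4 * p)) 0 := by
  have hq : ∀ h : ℝ, HasDerivAt (fun h : ℝ => p - 2 * h * b - h ^ 2) (- 2 * b - 2 * h) h := by
    intro h
    have := ((((hasDerivAt_id h).const_mul 2).mul_const b).const_sub p).sub ((hasDerivAt_id h).pow 2)
    exact this.congr_deriv (by simp)
  constructor
  · intro h
    exact (((hq h).pow 2).const_mul C).congr_deriv (by simp)
  · have hl : HasDerivAt (fun h : ℝ => - 2 * b - 2 * h) (-2) 0 := by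
      exact (((hasDerivAt_id (0:ℝ)).const_mul 2).const_sub (-2 * b)).congr_deriv (by simp)
    exact ((((hq 0).const_mul 2).mul hl).const_mul C).congr_deriv (by ring)

lemma aux_trace {N : ℕ} (f : Euc N → ℝ) (x y : Euc N) (C A : ℝ)
    (h1 : ∀ᶠ y in 𝓝 x, DifferentiableAt ℝ f y)
    (h2 : DifferentiableAt ℝ (fun y => gradient f y) x)
    (hmin : IsLocalMin (fun z => f z - C * (A - ‖z - y‖ ^ 2) ^ 2) x) :
    C * (8 * ‖x - y‖ ^ 2 - 4 * N * (A - ‖x - y‖ ^ 2)) ≤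
      LinearMap.trace ℝ (Euc N) (fderiv ℝ (fun y => gradient f y) x).toLinearMap := by
  rw [LinearMap.trace_eq_sum_inner _ (EuclideanSpace.basisFun (Fin N) ℝ)]
  have key : ∀ i : Fin N, C * (8 * ((x - y) i) ^ 2 - 4 * (A - ‖x - y‖ ^ 2)) ≤
      inner ℝ (EuclideanSpace.basisFun (Fin N) ℝ i)
        ((fderiv ℝ (fun y => gradient f y) x).toLinearMap (EuclideanSpace.basisFun (Fin N) ℝ i)) := by
    intro i
    set e := EuclideanSpace.basisFun (Fin N) ℝ i with he
    obtain ⟨d1, d2⟩ := aux_dir f x e h1 h2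
    obtain ⟨w1, w2⟩ := aux_W C (A - ‖x - y‖ ^ 2) ((x - y) i)
    have hn : ∀ h : ℝ, A - ‖x + h • e - y‖ ^ 2 = A - ‖x - y‖ ^ 2 - 2 * h * (x - y) i - h ^ 2 := by
      intro h
      have h3 : x + h • e - y = (x - y) + h • e := by abel
      have h4 : inner ℝ (x - y) e = (x - y) i := by
        rw [he, real_inner_comm]; simp [EuclideanSpace.inner_single_left]
      have h5 : ‖e‖ = 1 := by simp [he]
      rw [h3, norm_add_sq_real, inner_smul_right, h4, norm_smul, h5]
      simp
      ring
    have := aux_second_deriv_nonneg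
      (fun h : ℝ => f (x + h • e) - C * (A - ‖x - y‖ ^ 2 - 2 * h * (x - y) i - h ^ 2) ^ 2) _ _
      (d1.mono fun h hh => hh.sub (w1 h)) (d2.sub w2) (by
        have hc : Tendsto (fun h : ℝ => x + h • e) (𝓝 0) (𝓝 x) := by
          have : Continuous (fun h : ℝ => x + h • e) := by fun_prop
          simpa using this.tendsto 0
        have := hc.eventually hmin
        filter_upwards [this] with h hh
        rw [hn] at hh
        simpa using hh)
    exact sub_nonneg.1 this
  refine le_trans (le_of_eq ?_) (Finset.sum_le_sum fun i _ => key i)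
  rw [← Finset.mul_sum, Finset.sum_sub_distrib, ← Finset.mul_sum,
    EuclideanSpace.norm_sq_eq (x - y)]
  simp
  left; ring

lemma aux_time (ε K s a c r τ : ℝ) :
    HasDerivAt (fun τ : ℝ => ε * Real.exp (-K * (τ - s)) * (a + c * (τ - s) - r) ^ 2)
      (ε * Real.exp (-K * (τ - s)) *
        (2 * c * (a + c * (τ - s) - r) - K * (a + c * (τ - s) - r) ^ 2)) τ := by
  have h0 : HasDerivAt (fun τ : ℝ => τ - s) 1 τ := (hasDerivAt_id τ).sub_const s
  have h1 := ((h0.const_mul (-K)).exp.const_mul ε).mul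
    ((((h0.const_mul c).const_add a).sub_const r).pow 2)
  exact h1.congr_deriv (by simp; ring)

lemma aux_quad (δ2 A φ B K M : ℝ) (hδ : 0 < δ2) (hA : δ2 ≤ A)
    (hK : K = M + B ^ 2 / (16 * δ2)) (hφ : 0 < φ) :
    0 < 8 * A - B * φ + (K - M) * φ ^ 2 := by
  have h1 : 0 < 8 * δ2 - B * φ + (K - M) * φ ^ 2 := by
    rw [hK]
    have : 8 * δ2 - B * φ + (M + B ^ 2 / (16 * δ2) - M) * φ ^ 2
      = ((B * φ - 8 * δ2) ^ 2 + 64 * δ2 ^ 2) / (16 * δ2) := by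
      field_simp; ring
    rw [this]; positivity
  linarith

lemma aux_local
    (N : ℕ) (m M : ℝ)
    (Ω : Set (Euc N)) (hΩo : IsOpen Ω) (T : ℝ)
    (lam u : Euc N × ℝ → ℝ)
    (hlam : ∀ z ∈ Ω ×ˢ Ioo (0 : ℝ) T, m ≤ lam z ∧ lam z ≤ M) (hM : 0 < M)
    (hcont : ContinuousOn u (Ω ×ˢ Ioo (0 : ℝ) T))
    (hnn : ∀ z ∈ Ω ×ˢ Ioo (0 : ℝ) T, 0 ≤ u z)
    (hpde : ∀ z ∈ Ω ×ˢ Ioo (0 : ℝ) T,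
      DifferentiableAt ℝ (fun y => u (y, z.2)) z.1 ∧
      DifferentiableAt ℝ (fun y : Euc N => gradient (fun y' => u (y', z.2)) y) z.1 ∧
      DifferentiableAt ℝ (fun t => u (z.1, t)) z.2 ∧
      LinearMap.trace ℝ (Euc N)
          (fderiv ℝ (fun y : Euc N => gradient (fun y' => u (y', z.2)) y) z.1).toLinearMap
        - deriv (fun t => u (z.1, t)) z.2 = lam z * u z)
    (y : Euc N) (R s t : ℝ) (hR : 0 < R) (hball : closedBall y R ⊆ Ω) (hs : 0 < s) (hst : s < t)
    (htT : t < T) (hpos : 0 < u (y, s)) (x : Euc N) (hx : x ∈ ball y R) : 0 < u (x, t) := by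
  have hyΩ : y ∈ Ω := hball (by simp [hR.le])
  -- initial ball
  obtain ⟨δ, hδ, hδR, hinit⟩ : ∃ δ > 0, δ < R ∧ ∀ z ∈ closedBall y δ, u (y, s) / 2 ≤ u (z, s) := by
    have hc : ContinuousAt u (y, s) := hcont.continuousAt
      ((hΩo.prod isOpen_Ioo).mem_nhds ⟨hyΩ, hs, hst.trans htT⟩)
    have hc2 : ContinuousAt (fun z => u (z, s)) y :=
      ContinuousAt.comp (f := fun z : Euc N => (z, s)) hc (by fun_prop)
    have := hc2.eventually (lt_mem_nhds (show u (y, s) / 2 < u (y, s) by linarith))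
    obtain ⟨r, hr, h⟩ := Metric.eventually_nhds_iff_ball.1 this
    refine ⟨min r R / 2, by positivity, ?_, fun z hz => (h z ?_).le⟩
    · have := min_le_right r R; linarith
    · have := min_le_left r R
      simp only [mem_closedBall, mem_ball] at hz ⊢
      have : 0 < min r R := by positivity
      linarith
  obtain ⟨c, hc⟩ : ∃ c, c = (R ^ 2 - δ ^ 2) / (t - s) := ⟨_, rfl⟩
  have hts : 0 < t - s := by linarith
  have hcpos : 0 < c := by
    rw [hc]; apply div_pos _ hts; nlinarith
  have hct : c * (t - s) = R ^ 2 - δ ^ 2 := by rw [hc]; field_simp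
  obtain ⟨K, hK⟩ : ∃ K, K = M + (8 + 4 * N + 2 * c) ^ 2 / (16 * δ ^ 2) := ⟨_, rfl⟩
  obtain ⟨ε, hε⟩ : ∃ ε, ε = u (y, s) / 2 / δ ^ 4 := ⟨_, rfl⟩
  have hεpos : 0 < ε := by rw [hε]; positivity
  have hεδ : ε * δ ^ 4 = u (y, s) / 2 := by rw [hε]; field_simp
  let A : ℝ → ℝ := fun τ => δ ^ 2 + c * (τ - s)
  let C : ℝ → ℝ := fun τ => ε * Real.exp (-K * (τ - s))
  have hCpos : ∀ τ, 0 < C τ := fun τ => by positivity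
  let v : Euc N × ℝ → ℝ := fun z => u z - C z.2 * (A z.2 - ‖z.1 - y‖ ^ 2) ^ 2
  let D : Set (Euc N × ℝ) := {z | z.2 ∈ Icc s t ∧ ‖z.1 - y‖ ^ 2 ≤ A z.2}
  have hDsub : D ⊆ closedBall y R ×ˢ Icc s t := by
    rintro ⟨z, τ⟩ ⟨hτ, hz⟩
    refine ⟨?_, hτ⟩
    simp only [mem_closedBall, dist_eq_norm]
    simp only [A] at hz hτ
    have : c * (τ - s) ≤ c * (t - s) := by
      apply mul_le_mul_of_nonneg_left _ hcpos.le; linarith [hτ.2]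
    exact le_of_sq_le_sq (by linarith) hR.le
  have hDcl : IsClosed D := by
    apply IsClosed.inter
    · exact isClosed_Icc.preimage continuous_snd
    · have hA : Continuous A := by simp only [A]; fun_prop
      exact isClosed_le (f := fun z : Euc N × ℝ => ‖z.1 - y‖ ^ 2) (g := fun z => A z.2)
        (by fun_prop) (by fun_prop)
  have hDcomp : IsCompact D :=
    ((isCompact_closedBall y R).prod isCompact_Icc).of_isClosed_subset hDcl hDsub
  have hsub2 : closedBall y R ×ˢ Icc s t ⊆ Ω ×ˢ Ioo (0:ℝ) T :=
    prod_mono hball fun τ hτ => ⟨by linarith [hτ.1], by linarith [hτ.2]⟩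
  have hDΩ : D ⊆ Ω ×ˢ Ioo (0:ℝ) T := hDsub.trans hsub2
  have hvc : ContinuousOn v D := by
    apply (hcont.mono hDΩ).sub
    apply Continuous.continuousOn
    simp only [A, C]; fun_prop
  have hDne : D.Nonempty := ⟨(y, s), ⟨le_refl _, hst.le⟩, by simp [A]; positivity⟩
  obtain ⟨⟨xs, τ⟩, hzD, hzmin⟩ := hDcomp.exists_isMinOn hDne hvc
  have hmin : ∀ z ∈ D, v (xs, τ) ≤ v z := fun z hz => hzmin hz
  have hv : 0 ≤ v (xs, τ) := by
    by_contra hneg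
    push Not at hneg
    have hzΩ := hDΩ hzD
    obtain ⟨hxΩ, hτ0, hτT⟩ := hzΩ
    simp only at hxΩ hτ0 hτT
    have hu0 : 0 ≤ u (xs, τ) := hnn _ (hDΩ hzD)
    obtain ⟨⟨hsτ, hτt⟩, hle⟩ := hzD
    simp only at hsτ hτt hle
    -- strictly inside
    have hφ : 0 < A τ - ‖xs - y‖ ^ 2 := by
      rcases hle.lt_or_eq with h | h
      · linarith
      · exfalso
        simp only [v, h] at hneg
        simp at hneg
        linarith
    have hsτ' : s < τ := by
      rcases hsτ.lt_or_eq with h | h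
      · exact h
      · exfalso
        subst h
        have e1 : A s = δ ^ 2 := by simp [A]
        have e2 : C s = ε := by simp [C]
        simp only [v, e1, e2] at hneg
        rw [e1] at hle hφ
        have h3 := hinit xs (by
          simp only [mem_closedBall, dist_eq_norm]
          exact le_of_sq_le_sq hle hδ.le)
        have h4 : (δ ^ 2 - ‖xs - y‖ ^ 2) ^ 2 ≤ (δ ^ 2) ^ 2 := by
          apply pow_le_pow_left₀ hφ.le
          have := sq_nonneg ‖xs - y‖
          linarith
        have h5 := mul_le_mul_of_nonneg_left h4 hεpos.le
        have h6 : ε * (δ ^ 2) ^ 2 = ε * δ ^ 4 := by ring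
        linarith
    obtain ⟨-, p2, p3, p4⟩ := hpde (xs, τ) ⟨hxΩ, hτ0, hτT⟩
    simp only at p2 p3 p4
    have htr := aux_trace (fun y' => u (y', τ)) xs y (C τ) (A τ)
      (by
        filter_upwards [hΩo.mem_nhds hxΩ] with z hz
        exact (hpde (z, τ) ⟨hz, hτ0, hτT⟩).1) p2
      (by
        have : ∀ᶠ z in 𝓝 xs, 0 < A τ - ‖z - y‖ ^ 2 := by
          have hc : Continuous fun z : Euc N => A τ - ‖z - y‖ ^ 2 := by fun_prop
          exact hc.continuousAt.eventually (lt_mem_nhds hφ)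
        filter_upwards [this] with z hz
        exact hmin (z, τ) ⟨⟨hsτ, hτt⟩, by simp only; linarith⟩)
    have htd := aux_left_min _ _ τ
      (p3.hasDerivAt.sub (aux_time ε K s (δ ^ 2) c (‖xs - y‖ ^ 2) τ))
      (by
        have : ∀ᶠ τ' in 𝓝 τ, 0 < A τ' - ‖xs - y‖ ^ 2 := by
          have hc : Continuous fun τ' : ℝ => A τ' - ‖xs - y‖ ^ 2 := by simp only [A]; fun_prop
          exact hc.continuousAt.eventually (lt_mem_nhds hφ)
        filter_upwards [this.filter_mono nhdsWithin_le_nhds, self_mem_nhdsWithin,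
          (lt_mem_nhds hsτ').filter_mono nhdsWithin_le_nhds] with τ' h1 h2 h3
        simp only [mem_Iio] at h2
        exact hmin (xs, τ') ⟨⟨h3.le, by linarith⟩, by simp only; linarith⟩)
    have hq := aux_quad (δ ^ 2) (A τ) (A τ - ‖xs - y‖ ^ 2) (8 + 4 * N + 2 * c) K M (by positivity)
      (by
        have : 0 ≤ c * (τ - s) := mul_nonneg hcpos.le (by linarith)
        simp only [A]; linarith) hK hφ
    have hlu : lam (xs, τ) * u (xs, τ) ≤ M * u (xs, τ) :=
      mul_le_mul_of_nonneg_right (hlam _ ⟨hxΩ, hτ0, hτT⟩).2 hu0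
    have htd' : deriv (fun t => u (xs, t)) τ - C τ *
        (2 * c * (A τ - ‖xs - y‖ ^ 2) - K * (A τ - ‖xs - y‖ ^ 2) ^ 2) ≤ 0 := htd
    have hq' := mul_pos (hCpos τ) hq
    have hneg' : M * (u (xs, τ) - C τ * (A τ - ‖xs - y‖ ^ 2) ^ 2) < 0 :=
      mul_neg_of_pos_of_neg hM hneg
    nlinarith
  have hxD : (x, t) ∈ D := by
    refine ⟨⟨hst.le, le_refl _⟩, ?_⟩
    simp only [mem_ball, dist_eq_norm] at hx
    simp only [A, hct]
    have := pow_le_pow_left₀ (norm_nonneg _) hx.le 2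
    linarith
  have h1 := hv.trans (hmin _ hxD)
  have h2 : 0 < A t - ‖x - y‖ ^ 2 := by
    simp only [mem_ball, dist_eq_norm] at hx
    simp only [A, hct]
    have := pow_lt_pow_left₀ hx (norm_nonneg _) two_ne_zero
    linarith
  have h3 : 0 < C t * (A t - ‖x - y‖ ^ 2) ^ 2 := mul_pos (hCpos t) (pow_pos h2 2)
  have h4 : 0 ≤ u (x, t) - C t * (A t - ‖x - y‖ ^ 2) ^ 2 := h1
  linarith

/-- **Theorem 3.4 (Strong maximum principle, critical case, heat-operator version).** -/
theorem strong_maximum_principle_heat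
    (N : ℕ) (hN : 1 ≤ N) (m M : ℝ) (hm : 0 < m) (hmM : m ≤ M)
    (Ω : Set (Euc N)) (hΩo : IsOpen Ω) (hΩconn : IsConnected Ω)
    (T : ℝ) (hT : 0 < T)
    (lam u : Euc N × ℝ → ℝ)
    (hlam : ∀ z ∈ Ω ×ˢ Ioo (0 : ℝ) T, m ≤ lam z ∧ lam z ≤ M)
    (hcont : ContinuousOn u (Ω ×ˢ Ioo (0 : ℝ) T))
    (hnn : ∀ z ∈ Ω ×ˢ Ioo (0 : ℝ) T, 0 ≤ u z)
    (hpde : ∀ z ∈ Ω ×ˢ Ioo (0 : ℝ) T,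
      DifferentiableAt ℝ (fun y => u (y, z.2)) z.1 ∧
      DifferentiableAt ℝ (fun y : Euc N => gradient (fun y' => u (y', z.2)) y) z.1 ∧
      DifferentiableAt ℝ (fun t => u (z.1, t)) z.2 ∧
      LinearMap.trace ℝ (Euc N)
          (fderiv ℝ (fun y : Euc N => gradient (fun y' => u (y', z.2)) y) z.1).toLinearMap
        - deriv (fun t => u (z.1, t)) z.2 = lam z * u z)
    (x0 : Euc N) (t0 : ℝ) (hx0 : x0 ∈ Ω) (ht0 : t0 ∈ Ioo (0 : ℝ) T)
    (hzero : u (x0, t0) = 0) :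
    ∀ x ∈ Ω, ∀ t ∈ Ioc (0 : ℝ) t0, u (x, t) = 0 := by
  have hM : 0 < M := hm.trans_le hmM
  have hloc := aux_local N m M Ω hΩo T lam u hlam hM hcont hnn hpde
  -- it suffices to treat times strictly below t0
  have main : ∀ x ∈ Ω, ∀ t ∈ Ioo (0 : ℝ) t0, u (x, t) = 0 := by
    intro y hy s hs
    by_contra hne
    have hpos : 0 < u (y, s) := lt_of_le_of_ne
      (hnn _ ⟨hy, hs.1, hs.2.trans ht0.2⟩) (Ne.symm hne)
    let P : Set (Euc N) := {x | x ∈ Ω ∧ ∀ t ∈ Ioo s T, 0 < u (x, t)}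
    have step : ∀ x ∈ P, ∀ R > 0, closedBall x R ⊆ Ω → ball x R ⊆ P := by
      intro x hxP R hR hb z hz
      refine ⟨hb (ball_subset_closedBall hz), fun t ht => ?_⟩
      have h1 := ht.1
      have h2 := ht.2
      exact hloc x R ((s + t) / 2) t hR hb (by linarith [hs.1]) (by linarith) h2
        (hxP.2 _ ⟨by linarith, by linarith⟩) z hz
    have hrad : ∀ x ∈ Ω, ∃ R > 0, closedBall x R ⊆ Ω := fun x hx =>
      Metric.nhds_basis_closedBall.mem_iff.1 (hΩo.mem_nhds hx)
    have hsubP : Ω ⊆ P := by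
      apply hΩconn.isPreconnected.subset_of_closure_inter_subset
      · rw [Metric.isOpen_iff]
        intro x hx
        obtain ⟨R, hR, hb⟩ := hrad x hx.1
        exact ⟨R, hR, step x hx R hR hb⟩
      · obtain ⟨R, hR, hb⟩ := hrad y hy
        exact ⟨y, hy, hy, fun t ht =>
          hloc y R s t hR hb hs.1 ht.1 ht.2 hpos y (mem_ball_self hR)⟩
      · rintro x ⟨hxc, hxΩ⟩
        obtain ⟨R, hR, hb⟩ := hrad x hxΩ
        obtain ⟨z, hzP, hz⟩ := Metric.mem_closure_iff.1 hxc (R / 2) (half_pos hR)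
        refine step z hzP (R / 2) (half_pos hR) (fun w hw => hb ?_) hz
        simp only [mem_closedBall] at hw ⊢
        have := dist_triangle w z x
        rw [dist_comm z x] at this
        linarith
    have := (hsubP hx0).2 t0 ⟨hs.2, ht0.2⟩
    linarith
  intro x hx t ht
  rcases ht.2.lt_or_eq with h | h
  · exact main x hx t ⟨ht.1, h⟩
  · subst h
    have hd := (hpde (x, t) ⟨hx, ht0⟩).2.2.1.continuousAt
    simp only at hd
    have h1 : Tendsto (fun τ => u (x, τ)) (𝓝[<] t) (𝓝 (u (x, t))) :=
      hd.tendsto.mono_left nhdsWithin_le_nhds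
    have h2 : Tendsto (fun τ => u (x, τ)) (𝓝[<] t) (𝓝 0) := by
      apply tendsto_const_nhds.congr'
      filter_upwards [Ioo_mem_nhdsLT ht.1] with τ hτ
      exact (main x hx τ hτ).symm
    exact tendsto_nhds_unique h1 h2
end
end

section
/- (Remark after Corollary 4.1, Free boundary is Lebesgue-null) For every u ∈ 𝔍, the free boundary ∂{u>0} ∩ Q_{1/2} has (N+1)-dimensional Lebesgue measure zero. -/
noncomputable section

open Set Metric MeasureTheory

open Filter Topology

/-! ### One-dimensional calculus -/

lemma growth_of_deriv_ge {f f' : ℝ → ℝ} {b : ℝ}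
    (hf : ∀ᶠ s in 𝓝 (0:ℝ), HasDerivAt f (f' s) s)
    (hb : ∀ᶠ s in 𝓝[>] (0:ℝ), b * s ≤ f' s) :
    ∀ᶠ s in 𝓝[>] (0:ℝ), f 0 + b * s ^ 2 / 2 ≤ f s := by
  obtain ⟨ε, hε, h1⟩ := Metric.eventually_nhds_iff.1 hf
  obtain ⟨η, hη, h2⟩ := (mem_nhdsGT_iff_exists_Ioo_subset).1 hb
  have hη' : (0:ℝ) < η := hη
  have hmin : 0 < min ε η := lt_min hε hη'
  filter_upwards [Ioo_mem_nhdsGT hmin] with s hs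
  have hd : ∀ x ∈ Icc (0:ℝ) s, HasDerivAt (fun x => f x - b * x ^ 2 / 2) (f' x - b * x) x := by
    intro x hx
    have hx1 : HasDerivAt f (f' x) x := by
      apply h1
      rw [Real.dist_eq, sub_zero, abs_of_nonneg hx.1]
      exact lt_of_le_of_lt hx.2 (lt_of_lt_of_le hs.2 (min_le_left _ _))
    have h3 := ((hasDerivAt_pow 2 x).const_mul b).div_const 2
    have h4 := hx1.sub h3
    exact h4.congr_deriv (by push_cast; ring)
  have hm : MonotoneOn (fun x => f x - b * x ^ 2 / 2) (Icc (0:ℝ) s) := by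
    apply monotoneOn_of_deriv_nonneg (convex_Icc _ _)
    · intro x hx
      exact (hd x hx).continuousAt.continuousWithinAt
    · intro x hx
      exact (hd x (interior_subset hx)).differentiableAt.differentiableWithinAt
    · intro x hx
      rw [(hd x (interior_subset hx)).deriv]
      rw [interior_Icc] at hx
      have := h2 (show x ∈ Ioo 0 η from ⟨hx.1, hx.2.trans (lt_of_lt_of_le hs.2 (min_le_right _ _))⟩)
      have h5 : b * x ≤ f' x := this
      linarith
  have := hm (left_mem_Icc.2 hs.1.le) (right_mem_Icc.2 hs.1.le) hs.1.le
  simp only at this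
  have h0 : b * (0:ℝ) ^ 2 / 2 = 0 := by norm_num
  linarith

lemma second_order_max {f f' : ℝ → ℝ} {a : ℝ}
    (hf : ∀ᶠ s in 𝓝 (0:ℝ), HasDerivAt f (f' s) s) (ha : HasDerivAt f' a 0)
    (hmax : IsLocalMax f 0) : f' 0 = 0 ∧ a ≤ 0 := by
  have h0 : f' 0 = 0 := hmax.hasDerivAt_eq_zero hf.self_of_nhds
  refine ⟨h0, ?_⟩
  by_contra hpos
  push Not at hpos
  have h1 : ∀ᶠ s in 𝓝[>] (0:ℝ), (a / 2) * s ≤ f' s := by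
    have := (hasDerivAt_iff_tendsto_slope.1 ha).eventually (lt_mem_nhds (show a / 2 < a by linarith))
    have h2 := this.filter_mono (nhdsWithin_mono (0:ℝ) (fun x (hx : 0 < x) => ne_of_gt hx))
    filter_upwards [h2, self_mem_nhdsWithin] with s hs hs0
    have hs0' : (0:ℝ) < s := hs0
    rw [slope_def_field, h0, sub_zero, sub_zero, lt_div_iff₀ hs0'] at hs
    exact hs.le
  have h2 := growth_of_deriv_ge hf h1
  have h3 : ∀ᶠ s in 𝓝[>] (0:ℝ), f s ≤ f 0 := hmax.filter_mono nhdsWithin_le_nhds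
  obtain ⟨s, ⟨hs1, hs2⟩, hs3⟩ := ((h2.and h3).and self_mem_nhdsWithin).exists
  have hs0' : (0:ℝ) < s := hs3
  have : 0 < a / 2 * s ^ 2 / 2 := by positivity
  linarith

/-! ### Gradient facts -/

lemma line_hasDerivAt {N : ℕ} {v : Euc N → ℝ} {y h : Euc N} {s : ℝ}
    (hd : DifferentiableAt ℝ v (y + s • h)) :
    HasDerivAt (fun s : ℝ => v (y + s • h)) (inner ℝ (gradient v (y + s • h)) h) s := by
  have h1 : HasFDerivAt v (fderiv ℝ v (y + s • h)) (y + s • h) := hd.hasFDerivAt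
  have h2 : HasDerivAt (fun s : ℝ => y + s • h) h s := by
    simpa using ((hasDerivAt_id s).smul_const h).const_add y
  have h3 := h1.comp_hasDerivAt s h2
  have : inner ℝ (gradient v (y + s • h)) h = fderiv ℝ v (y + s • h) h := by
    rw [← toDual_gradient, InnerProductSpace.toDual_apply_apply]
  rw [this]
  exact h3

lemma pvf_norm {N : ℕ} {p : ℝ} (g : Euc N) (hg : g ≠ 0) :
    ‖(‖g‖ ^ (p - 2) • g)‖ = ‖g‖ ^ (p - 1) := by
  have hg' : 0 < ‖g‖ := norm_pos_iff.2 hg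
  rw [norm_smul, Real.norm_of_nonneg (by positivity)]
  rw [show p - 1 = (p - 2) + 1 by ring, Real.rpow_add hg', Real.rpow_one]

lemma pvf_inv {N : ℕ} {p : ℝ} (hp : 2 ≤ p) (g : Euc N) :
    ‖(‖g‖ ^ (p - 2) • g)‖ ^ (-((p - 2) / (p - 1))) • (‖g‖ ^ (p - 2) • g) = g := by
  by_cases hg : g = 0
  · simp [hg]
  have hg' : 0 < ‖g‖ := norm_pos_iff.2 hg
  rw [pvf_norm g hg, ← Real.rpow_mul hg'.le, smul_smul, ← Real.rpow_add hg']
  have : (p - 1) * -((p - 2) / (p - 1)) + (p - 2) = 0 := by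
    have : p - 1 ≠ 0 := by linarith
    field_simp
    ring
  rw [this, Real.rpow_zero, one_smul]

lemma grad_differentiableAt {N : ℕ} {p : ℝ} (hp : 2 ≤ p) {G : Euc N → Euc N} {y : Euc N}
    (hV : DifferentiableAt ℝ (fun z => ‖G z‖ ^ (p - 2) • G z) y) (hg : G y ≠ 0) :
    DifferentiableAt ℝ G y := by
  have hg' : 0 < ‖G y‖ := norm_pos_iff.2 hg
  have hV0 : ‖G y‖ ^ (p - 2) • G y ≠ 0 := smul_ne_zero (by positivity) hg
  have h1 : DifferentiableAt ℝ (fun z => ‖(‖G z‖ ^ (p - 2) • G z)‖) y := hV.norm ℝ hV0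
  have h2 : DifferentiableAt ℝ
      (fun z => ‖(‖G z‖ ^ (p - 2) • G z)‖ ^ (-((p - 2) / (p - 1)))) y :=
    h1.rpow_const (Or.inl (norm_ne_zero_iff.2 hV0))
  have h3 := h2.smul hV
  refine h3.congr_of_eventuallyEq (Eventually.of_forall fun z => ?_)
  exact (pvf_inv hp (G z)).symm

lemma trace_formula {N : ℕ} {p : ℝ} {G : Euc N → Euc N} {y : Euc N}
    {H : Euc N →L[ℝ] Euc N} (hG : HasFDerivAt G H y) (hg : G y ≠ 0) :
    LinearMap.trace ℝ (Euc N) (fderiv ℝ (fun z => ‖G z‖ ^ (p - 2) • G z) y).toLinearMap =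
      ‖G y‖ ^ (p - 2) * (LinearMap.trace ℝ (Euc N) H.toLinearMap
        + (p - 2) * (inner ℝ (G y) (H (G y)) / ‖G y‖ ^ 2)) := by
  have hg' : 0 < ‖G y‖ := norm_pos_iff.2 hg
  have h1 : HasFDerivAt (fun z => ‖G z‖ ^ 2) (2 • (innerSL ℝ (G y)).comp H) y := hG.norm_sq
  have h2 : HasFDerivAt (fun z => (‖G z‖ ^ 2) ^ ((p - 2) / 2)) _ y :=
    h1.rpow_const (Or.inl (by positivity))
  have h3 : (fun z => ‖G z‖ ^ (p - 2) • G z) = fun z => (‖G z‖ ^ 2) ^ ((p - 2) / 2) • G z := by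
    funext z
    rw [← Real.rpow_natCast, ← Real.rpow_mul (norm_nonneg _)]
    congr 2
    push_cast; ring
  have h4 := h2.smul hG
  rw [h3]
  erw [h4.fderiv]
  have e1 : (‖G y‖ ^ 2) ^ ((p - 2) / 2) = ‖G y‖ ^ (p - 2) := by
    rw [← Real.rpow_natCast, ← Real.rpow_mul (norm_nonneg _)]
    congr 1
    push_cast; ring
  have e2 : (‖G y‖ ^ 2) ^ ((p - 2) / 2 - 1) = ‖G y‖ ^ (p - 2) / ‖G y‖ ^ 2 := by
    rw [Real.rpow_sub (by positivity), e1, Real.rpow_one]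
  let b := EuclideanSpace.basisFun (Fin N) ℝ
  rw [LinearMap.trace_eq_sum_inner _ b, LinearMap.trace_eq_sum_inner _ b]
  rw [e1, e2]
  simp only [ContinuousLinearMap.coe_coe, add_apply, smul_apply,
    ContinuousLinearMap.smulRight_apply, ContinuousLinearMap.comp_apply, innerSL_apply_apply,
    inner_add_right, inner_smul_right, Finset.sum_add_distrib, ← Finset.mul_sum, mul_add, smul_eq_mul]
  congr 1
  have e3 : inner ℝ (G y) (H (G y)) = ∑ i, inner ℝ (G y) (H (b i)) * inner ℝ (b i) (G y) := by
    have h5 : H (G y) = ∑ i, inner ℝ (b i) (G y) • H (b i) := by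
      conv_lhs => rw [← b.sum_repr' (G y)]
      rw [map_sum]
      simp only [map_smul]
    rw [h5, inner_sum]
    refine Finset.sum_congr rfl fun i _ => ?_
    rw [inner_smul_right, mul_comm]
  rw [e3, Finset.sum_div, Finset.mul_sum, Finset.mul_sum]
  refine Finset.sum_congr rfl fun i _ => ?_
  simp only [nsmul_eq_mul]
  push_cast
  field_simp

lemma hess_symm {N : ℕ} {v : Euc N → ℝ} {y : Euc N} {H : Euc N →L[ℝ] Euc N}
    (hd : ∀ᶠ z in 𝓝 y, DifferentiableAt ℝ v z) (hG : HasFDerivAt (gradient v) H y) :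
    H.toLinearMap.IsSymmetric := by
  let L : Euc N →L[ℝ] Euc N →L[ℝ] ℝ :=
    (isBoundedBilinearMap_inner (𝕜 := ℝ) (E := Euc N)).toContinuousLinearMap
  have hL : ∀ a b, L a b = inner ℝ a b := fun a b => rfl
  have h1 : HasFDerivAt (fderiv ℝ v) (L.comp H) y := by
    have := L.hasFDerivAt.comp y hG
    have he : fderiv ℝ v = L ∘ gradient v := by
      funext z
      ext w
      simp only [Function.comp_apply, hL]
      rw [← toDual_gradient, InnerProductSpace.toDual_apply_apply]
    rw [he]
    exact this
  intro a b
  have := second_derivative_symmetric_of_eventually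
    (hd.mono fun z hz => hz.hasFDerivAt) h1 a b
  simp only [ContinuousLinearMap.comp_apply, hL] at this
  simp only [ContinuousLinearMap.coe_coe]
  rw [this, real_inner_comm]

lemma det_le_of_symm {N : ℕ} {B : Euc N →L[ℝ] Euc N} {K : ℝ}
    (hs : B.toLinearMap.IsSymmetric) (hneg : ∀ h, inner ℝ (B h) h ≤ 0)
    (htr : -K ≤ LinearMap.trace ℝ (Euc N) B.toLinearMap) :
    |B.det| ≤ K ^ N := by
  have hn : Module.finrank ℝ (Euc N) = N := by simp
  have hev : ∀ i, hs.eigenvalues hn i ≤ 0 := by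
    intro i
    have h1 := hs.apply_eigenvectorBasis hn i
    have h2 := hneg (hs.eigenvectorBasis hn i)
    simp only [ContinuousLinearMap.coe_coe] at h1
    rw [h1, inner_smul_left, real_inner_self_eq_norm_sq] at h2
    simpa using h2
  have hdet : B.det = ∏ i, hs.eigenvalues hn i := by
    have := hs.det_eq_prod_eigenvalues hn
    simpa using this
  have htr' : LinearMap.trace ℝ (Euc N) B.toLinearMap = ∑ i, hs.eigenvalues hn i := by
    have := hs.trace_eq_sum_eigenvalues hn
    simpa using this
  rw [htr'] at htr
  rw [hdet, Finset.abs_prod]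
  calc ∏ i, |hs.eigenvalues hn i| ≤ ∏ _i : Fin N, K := by
        apply Finset.prod_le_prod
        · intros; positivity
        · intro i _
          rw [abs_of_nonpos (hev i)]
          have : ∑ j, - hs.eigenvalues hn j ≤ K := by rw [Finset.sum_neg_distrib]; linarith
          exact (Finset.single_le_sum (f := fun j => - hs.eigenvalues hn j)
            (fun j _ => by have := hev j; linarith) (Finset.mem_univ i)).trans this
    _ = K ^ N := by simp

/-! ### Barriers -/

lemma barrier_touch {N : ℕ} {v : Euc N → ℝ} {y x1 ξ : Euc N} {c : ℝ} {j : ℕ} (hc : 0 ≤ c)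
    (hd : ∀ᶠ z in 𝓝 y, DifferentiableAt ℝ v z)
    (hmax : IsLocalMax (fun z => v z - (c * (‖z - x1‖ ^ 2) ^ (j + 1) + inner ℝ ξ (z - x1))) y) :
    gradient v y = (2 * c * (j + 1) * (‖y - x1‖ ^ 2) ^ j) • (y - x1) + ξ ∧
    (DifferentiableAt ℝ (gradient v) y → ∀ h, inner ℝ (fderiv ℝ (gradient v) y h) h ≤
      2 * c * (j + 1) * (2 * j + 1) * (‖y - x1‖ ^ 2) ^ j * ‖h‖ ^ 2) := by
  set w := y - x1 with hw
  -- the line through `y` in direction `h`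
  have hline : ∀ h : Euc N, Tendsto (fun s : ℝ => y + s • h) (𝓝 0) (𝓝 y) := by
    intro h
    have : Continuous (fun s : ℝ => y + s • h) := by fun_prop
    simpa using this.tendsto 0
  let P : Euc N → ℝ → ℝ := fun h s => ‖w‖ ^ 2 + 2 * s * inner ℝ w h + s ^ 2 * ‖h‖ ^ 2
  have hP : ∀ h s, ‖y + s • h - x1‖ ^ 2 = P h s := by
    intro h s
    have : y + s • h - x1 = w + s • h := by rw [hw]; abel
    rw [this, norm_add_sq_real, inner_smul_right, norm_smul, mul_pow, Real.norm_eq_abs, sq_abs]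
    simp only [P]; ring
  have hPd : ∀ h s, HasDerivAt (P h) (2 * inner ℝ w h + 2 * s * ‖h‖ ^ 2) s := by
    intro h s
    have h1 : HasDerivAt (fun s : ℝ => 2 * s * inner ℝ w h) (2 * inner ℝ w h) s := by
      simpa using ((hasDerivAt_id s).const_mul 2).mul_const (inner ℝ w h)
    have h2 : HasDerivAt (fun s : ℝ => s ^ 2 * ‖h‖ ^ 2) (2 * s * ‖h‖ ^ 2) s := by
      simpa using (hasDerivAt_pow 2 s).mul_const (‖h‖ ^ 2)
    exact (h1.const_add (‖w‖ ^ 2)).add h2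
  have hP0 : ∀ h, P h 0 = ‖w‖ ^ 2 := by intro h; simp [P]
  let f' : Euc N → ℝ → ℝ := fun h s => inner ℝ (gradient v (y + s • h)) h -
    (c * ((j + 1 : ℕ) * P h s ^ j * (2 * inner ℝ w h + 2 * s * ‖h‖ ^ 2)) + inner ℝ ξ h)
  have hf : ∀ h, ∀ᶠ s in 𝓝 (0:ℝ), HasDerivAt (fun s : ℝ => v (y + s • h) -
      (c * (‖y + s • h - x1‖ ^ 2) ^ (j + 1) + inner ℝ ξ (y + s • h - x1))) (f' h s) s := by
    intro h
    filter_upwards [(hline h).eventually hd] with s hs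
    have h1 := line_hasDerivAt hs
    have h2 : HasDerivAt (fun s => c * (‖y + s • h - x1‖ ^ 2) ^ (j + 1))
        (c * ((j + 1 : ℕ) * P h s ^ j * (2 * inner ℝ w h + 2 * s * ‖h‖ ^ 2))) s := by
      simp only [hP]
      exact ((hPd h s).pow (j + 1)).const_mul c
    have h3 : HasDerivAt (fun s : ℝ => inner ℝ ξ (y + s • h - x1)) (inner ℝ ξ h) s := by
      have h4 : HasDerivAt (fun s : ℝ => inner ℝ ξ (y - x1) + s * inner ℝ ξ h)
          (1 * inner ℝ ξ h) s :=
        ((hasDerivAt_id s).mul_const _).const_add _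
      rw [one_mul] at h4
      convert h4 using 2 with s'
      rw [add_sub_right_comm, inner_add_right, inner_smul_right]
    exact h1.sub (h2.add h3)
  have hlm : ∀ h, IsLocalMax (fun s : ℝ => v (y + s • h) -
      (c * (‖y + s • h - x1‖ ^ 2) ^ (j + 1) + inner ℝ ξ (y + s • h - x1))) 0 := by
    intro h
    have := (hline h).eventually hmax
    filter_upwards [this] with s hs
    simpa using hs
  constructor
  · apply ext_inner_right ℝ
    intro h
    have h0 := (hlm h).hasDerivAt_eq_zero (hf h).self_of_nhds
    simp only [f', hP0, zero_smul, add_zero] at h0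
    rw [inner_add_left, real_inner_smul_left]
    push_cast at h0
    linarith
  · intro hG h
    have hf2 : HasDerivAt (f' h) (inner ℝ (fderiv ℝ (gradient v) y h) h -
      c * ((j + 1 : ℕ) * (((j : ℕ) * ‖w‖ ^ 2 ^ 0 * 0 + (j : ℝ) * (‖w‖ ^ 2) ^ (j - 1) *
        (2 * inner ℝ w h)) * (2 * inner ℝ w h)
        + (‖w‖ ^ 2) ^ j * (2 * ‖h‖ ^ 2)))) 0 := by
      have h1 : HasDerivAt (fun s : ℝ => y + s • h) h 0 := by
        simpa using ((hasDerivAt_id (0:ℝ)).smul_const h).const_add y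
      have hG' : HasFDerivAt (gradient v) (fderiv ℝ (gradient v) y) (y + (0:ℝ) • h) := by
        simpa using hG.hasFDerivAt
      have h2 : HasDerivAt (fun s : ℝ => gradient v (y + s • h))
        (fderiv ℝ (gradient v) y h) 0 := by
        have := HasFDerivAt.comp_hasDerivAt (f := fun s : ℝ => y + s • h) (0:ℝ) hG' h1
        exact this
      have h3 : HasDerivAt (fun s : ℝ => inner ℝ (gradient v (y + s • h)) h)
        (inner ℝ (fderiv ℝ (gradient v) y h) h) 0 := by
        simpa using h2.inner ℝ (hasDerivAt_const (0:ℝ) h)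
      have h4 := (hPd h 0).pow j
      have h5 : HasDerivAt (fun s : ℝ => 2 * inner ℝ w h + 2 * s * ‖h‖ ^ 2) (2 * ‖h‖ ^ 2) 0 := by
        simpa using (((hasDerivAt_id (0:ℝ)).const_mul 2).mul_const (‖h‖ ^ 2)).const_add
          (2 * inner ℝ w h)
      have h6 := (((h4.mul h5).const_mul ((j + 1 : ℕ) : ℝ)).const_mul c).add_const (inner ℝ ξ h)
      have h7 := h3.sub h6
      refine (h7.congr_deriv ?_).congr_of_eventuallyEq (Eventually.of_forall fun s => ?_)
      · simp only [hP0, Pi.pow_apply]; ring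
      · simp only [f', Pi.pow_apply, Pi.mul_apply]
        simp [mul_assoc]
    have h8 := (second_order_max (hf h) hf2 (hlm h)).2
    have hcs : (inner ℝ w h) ^ 2 ≤ ‖w‖ ^ 2 * ‖h‖ ^ 2 := by
      rw [← mul_pow, ← sq_abs]
      exact pow_le_pow_left₀ (abs_nonneg _) (abs_real_inner_le_norm w h) 2
    have hkey : (j : ℝ) * (‖w‖ ^ 2) ^ (j - 1) * (inner ℝ w h) ^ 2 ≤
        j * ((‖w‖ ^ 2) ^ j * ‖h‖ ^ 2) := by
      rcases Nat.eq_zero_or_pos j with hj | hj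
      · simp [hj]
      · obtain ⟨i, rfl⟩ : ∃ i, j = i + 1 := ⟨j - 1, by omega⟩
        rw [mul_assoc]
        apply mul_le_mul_of_nonneg_left _ (Nat.cast_nonneg _)
        rw [Nat.add_sub_cancel, pow_succ (‖w‖ ^ 2) i, mul_assoc]
        exact mul_le_mul_of_nonneg_left hcs (by positivity)
    have h9 : 4 * (c * (j + 1)) * ((j : ℝ) * (‖w‖ ^ 2) ^ (j - 1) * (inner ℝ w h) ^ 2) ≤
        4 * (c * (j + 1)) * (j * ((‖w‖ ^ 2) ^ j * ‖h‖ ^ 2)) :=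
      mul_le_mul_of_nonneg_left hkey (by positivity)
    push_cast at h8
    linarith

/-- Properties of a time slice used in the argument. -/
structure SliceSub (N : ℕ) (p q m : ℝ) (v : Euc N → ℝ) : Prop where
  cont : ContinuousOn v (ball 0 1)
  diff : ∀ y ∈ ball (0 : Euc N) 1, DifferentiableAt ℝ v y
  vf : ∀ y ∈ ball (0 : Euc N) 1,
    DifferentiableAt ℝ (fun z => ‖gradient v z‖ ^ (p - 2) • gradient v z) y
  sub : ∀ y ∈ ball (0 : Euc N) 1, 0 < v y → m * (v y) ^ q ≤ LinearMap.trace ℝ (Euc N)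
    (fderiv ℝ (fun z => ‖gradient v z‖ ^ (p - 2) • gradient v z) y).toLinearMap
  nonneg : ∀ y ∈ ball (0 : Euc N) 1, 0 ≤ v y
  le_one : ∀ y ∈ ball (0 : Euc N) 1, v y ≤ 1

lemma SliceSub.ev_diff {N : ℕ} {p q m : ℝ} {v : Euc N → ℝ} (hv : SliceSub N p q m v) {y : Euc N}
    (hy : y ∈ ball (0 : Euc N) 1) : ∀ᶠ z in 𝓝 y, DifferentiableAt ℝ v z := by
  filter_upwards [isOpen_ball.mem_nhds hy] with z hz using hv.diff z hz

/-- ABP type estimate. -/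
lemma abp {N : ℕ} {p q m : ℝ} (hp : 2 ≤ p) (hm : 0 < m) {v : Euc N → ℝ}
    (hv : SliceSub N p q m v) {x1 : Euc N} {r S : ℝ} (hr : 0 < r)
    (hsub : closedBall x1 r ⊆ ball 0 1) (hS : ∀ z ∈ closedBall x1 r, v z ≤ S) (ha : 0 < v x1) :
    volume (ball (0 : Euc N) (v x1 / (2 * r))) ≤
      ENNReal.ofReal (2 * (2 * (S / r ^ 2) * (N + p)) ^ N) *
        volume (ball x1 r ∩ v ⁻¹' Ioi 0) := by
  set C := S / r ^ 2 with hC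
  have hx1 : x1 ∈ closedBall x1 r := mem_closedBall_self hr.le
  have hSpos : 0 < S := ha.trans_le (hS x1 hx1)
  have hCpos : 0 < C := by positivity
  have hCr : C * r ^ 2 = S := by rw [hC]; field_simp
  set E := ball x1 r ∩ v ⁻¹' Ioi 0 with hE
  have hEo : IsOpen E := (hv.cont.mono (ball_subset_closedBall.trans hsub)).isOpen_inter_preimage
    isOpen_ball isOpen_Ioi
  set Φ : Euc N → Euc N := fun y => gradient v y - (2 * C) • (y - x1) with hΦ
  set K : ℝ := 2 * C * (N + p) with hK
  have hKpos : 0 ≤ K := by positivity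
  set E1 := {y | DifferentiableAt ℝ Φ y} ∩ {y | |(fderiv ℝ Φ y).det| ≤ K ^ N} ∩ E with hE1
  have hE1m : MeasurableSet E1 := by
    refine ((measurableSet_of_differentiableAt ℝ Φ).inter ?_).inter hEo.measurableSet
    have h1 : Measurable (fun y => |(fderiv ℝ Φ y).det|) :=
      (ContinuousLinearMap.continuous_det.measurable.comp (measurable_fderiv ℝ Φ)).abs
    exact measurableSet_le h1 measurable_const
  have hcover : ball (0 : Euc N) (v x1 / (2 * r)) ⊆
      Φ '' E1 ∪ AffineMap.homothety (k := ℝ) (0 : Euc N) (-(2 * C)) '' ((fun z => z + (-x1)) '' E) := by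
    intro ξ hξ
    rw [mem_ball_zero_iff, lt_div_iff₀ (by positivity)] at hξ
    have hip : ∀ z ∈ closedBall x1 r, |inner ℝ ξ (z - x1)| < v x1 / 2 := by
      intro z hz
      rw [mem_closedBall, dist_eq_norm] at hz
      have h1 := abs_real_inner_le_norm ξ (z - x1)
      have h2 := mul_le_mul_of_nonneg_left hz (norm_nonneg ξ)
      linarith
    obtain ⟨y, hyb, hy⟩ := (isCompact_closedBall x1 r).exists_isMaxOn ⟨x1, hx1⟩
      (f := fun z => v z - (C * (‖z - x1‖ ^ 2) ^ (0 + 1) + inner ℝ ξ (z - x1)))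
      ((hv.cont.mono hsub).sub (by fun_prop))
    have hyx := hy hx1
    simp only [sub_self, norm_zero, inner_zero_right, mem_ofPred_eq, zero_add, pow_one] at hyx
    have hipy := abs_lt.1 (hip y hyb)
    have hyint : y ∈ ball x1 r := by
      by_contra hcon
      have h1 : ‖y - x1‖ = r := by
        rw [mem_ball, dist_eq_norm, not_lt] at hcon
        rw [mem_closedBall, dist_eq_norm] at hyb
        exact le_antisymm hyb hcon
      rw [h1, hCr] at hyx
      have := hS y hyb
      norm_num at hyx
      linarith [hipy.1]
    have hvy : 0 < v y := by
      have : 0 ≤ C * ‖y - x1‖ ^ 2 := by positivity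
      norm_num at hyx
      linarith [hipy.1]
    have hyE : y ∈ E := ⟨hyint, hvy⟩
    have hyb1 : y ∈ ball (0 : Euc N) 1 := hsub hyb
    have hlm : IsLocalMax (fun z => v z - (C * (‖z - x1‖ ^ 2) ^ (0 + 1) + inner ℝ ξ (z - x1))) y := by
      refine hy.isLocalMax ?_
      exact mem_of_superset (isOpen_ball.mem_nhds hyint) ball_subset_closedBall
    obtain ⟨hg1, hg2⟩ := barrier_touch hCpos.le (hv.ev_diff hyb1) hlm
    have hg1' : gradient v y = (2 * C) • (y - x1) + ξ := by simpa using hg1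
    by_cases hg : gradient v y = 0
    · right
      refine ⟨y - x1, ⟨y, hyE, (sub_eq_add_neg y x1).symm⟩, ?_⟩
      rw [AffineMap.homothety_apply]
      rw [hg] at hg1'
      simp only [vsub_eq_sub, sub_zero, vadd_eq_add, add_zero, neg_smul]
      exact (eq_neg_of_add_eq_zero_right hg1'.symm).symm
    · left
      refine ⟨y, ⟨⟨?_, ?_⟩, hyE⟩, ?_⟩
      all_goals have hGd := grad_differentiableAt hp (hv.vf y hyb1) hg
      · exact hGd.sub (by fun_prop)
      · have hΦd : fderiv ℝ Φ y = fderiv ℝ (gradient v) y - (2 * C) • ContinuousLinearMap.id ℝ (Euc N) := by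
          have h1 : HasFDerivAt (fun z : Euc N => (2 * C) • (z - x1))
              ((2 * C) • ContinuousLinearMap.id ℝ (Euc N)) y :=
            ((hasFDerivAt_id y).sub_const x1).const_smul (2 * C)
          exact (hGd.hasFDerivAt.sub h1).fderiv
        have hsymm := hess_symm (hv.ev_diff hyb1) hGd.hasFDerivAt
        have hneg := hg2 hGd
        have htr := trace_formula (p := p) hGd.hasFDerivAt hg
        have hsubs := hv.sub y hyb1 hvy
        rw [htr] at hsubs
        have hgpos : 0 < ‖gradient v y‖ := norm_pos_iff.2 hg
        have h2 : 0 ≤ LinearMap.trace ℝ (Euc N) (fderiv ℝ (gradient v) y).toLinearMap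
            + (p - 2) * (inner ℝ (gradient v y) (fderiv ℝ (gradient v) y (gradient v y)) / ‖gradient v y‖ ^ 2) := by
          have h3 : 0 < m * v y ^ q := by positivity
          have h4 : 0 < ‖gradient v y‖ ^ (p - 2) := by positivity
          exact (pos_of_mul_pos_right (h3.trans_le hsubs) h4.le).le
        have h5 : inner ℝ (gradient v y) (fderiv ℝ (gradient v) y (gradient v y)) / ‖gradient v y‖ ^ 2
            ≤ 2 * C := by
          rw [div_le_iff₀ (by positivity), real_inner_comm]
          simpa using hneg (gradient v y)
        have h6 := mul_le_mul_of_nonneg_left h5 (show 0 ≤ p - 2 by linarith)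
        show |(fderiv ℝ Φ y).det| ≤ K ^ N
        rw [hΦd]
        apply det_le_of_symm
        · intro a b
          have := hsymm a b
          simp only [ContinuousLinearMap.coe_coe] at this
          simp [inner_sub_left, inner_sub_right, inner_smul_left, inner_smul_right, this]
        · intro h
          have h7 := hneg h
          simp only [sub_apply, smul_apply,
            ContinuousLinearMap.id_apply, inner_sub_left, real_inner_smul_left, real_inner_self_eq_norm_sq]
          norm_num at h7
          linarith
        · have h8 : LinearMap.trace ℝ (Euc N) (fderiv ℝ (gradient v) y -
              (2 * C) • ContinuousLinearMap.id ℝ (Euc N)).toLinearMap =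
              LinearMap.trace ℝ (Euc N) (fderiv ℝ (gradient v) y).toLinearMap - 2 * C * N := by
            have : (fderiv ℝ (gradient v) y -
              (2 * C) • ContinuousLinearMap.id ℝ (Euc N)).toLinearMap =
              (fderiv ℝ (gradient v) y).toLinearMap - (2 * C) • (LinearMap.id : Euc N →ₗ[ℝ] Euc N) := rfl
            rw [this, map_sub, map_smul, LinearMap.trace_id]
            simp
          rw [h8, hK]
          nlinarith
      · simp only [hΦ]
        rw [hg1']; abel
  have hm1 : volume (Φ '' E1) ≤ ENNReal.ofReal (K ^ N) * volume E := by
    calc volume (Φ '' E1) ≤ ∫⁻ x in E1, ENNReal.ofReal |(fderiv ℝ Φ x).det| :=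
          addHaar_image_le_lintegral_abs_det_fderiv volume hE1m
            (fun x hx => hx.1.1.hasFDerivAt.hasFDerivWithinAt)
      _ ≤ ∫⁻ x in E1, ENNReal.ofReal (K ^ N) :=
          setLIntegral_mono' hE1m (fun x hx => ENNReal.ofReal_le_ofReal hx.1.2)
      _ = ENNReal.ofReal (K ^ N) * volume E1 := by simp
      _ ≤ _ := by gcongr; exact inter_subset_right
  have hm2 : volume (AffineMap.homothety (k := ℝ) (0 : Euc N) (-(2 * C)) '' ((fun z => z + (-x1)) '' E))
      ≤ ENNReal.ofReal (K ^ N) * volume E := by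
    rw [Measure.addHaar_image_homothety, image_add_right, measure_preimage_add_right]
    gcongr
    rw [finrank_euclideanSpace_fin, abs_pow, abs_neg, abs_of_pos (by positivity : 0 < 2 * C)]
    apply pow_le_pow_left₀ (by positivity)
    rw [hK]
    have : (1:ℝ) ≤ N + p := by have : (0:ℝ) ≤ N := Nat.cast_nonneg N
                               linarith
    nlinarith
  calc _ ≤ _ := measure_mono hcover
    _ ≤ _ := measure_union_le _ _
    _ ≤ _ := add_le_add hm1 hm2
    _ = _ := by
      rw [← two_mul, ENNReal.ofReal_mul zero_le_two, mul_assoc]; simp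

/-! ### Non-degeneracy -/

lemma slope_lower {f' : ℝ → ℝ} {a : ℝ} (ha : HasDerivAt f' a 0) (h0 : f' 0 = 0) (hpos : 0 < a) :
    ∀ᶠ s in 𝓝[>] (0:ℝ), (a / 2) * s ≤ f' s := by
  have := (hasDerivAt_iff_tendsto_slope.1 ha).eventually (lt_mem_nhds (show a / 2 < a by linarith))
  have h2 := this.filter_mono (nhdsWithin_mono (0:ℝ) (fun x (hx : 0 < x) => ne_of_gt hx))
  filter_upwards [h2, self_mem_nhdsWithin] with s hs hs0
  have hs0' : (0:ℝ) < s := hs0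
  rw [slope_def_field, h0, sub_zero, sub_zero, lt_div_iff₀ hs0'] at hs
  exact hs.le

/-- At a critical point in the positivity set, `v` cannot be touched from above by a
higher order power. -/
lemma no_degenerate_touch {N : ℕ} {p q m : ℝ} (hp : 2 ≤ p) (hm : 0 < m) {v : Euc N → ℝ}
    (hv : SliceSub N p q m v) {x : Euc N} (hx : x ∈ ball (0 : Euc N) 1) (hpos : 0 < v x)
    (hg : gradient v x = 0) {c : ℝ} {j : ℕ} (hj : 1 ≤ j)
    (hmax : ∀ᶠ z in 𝓝 x, v z ≤ v x + c * (‖z - x‖ ^ 2) ^ (j + 1)) : False := by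
  set V : Euc N → Euc N := fun z => ‖gradient v z‖ ^ (p - 2) • gradient v z with hV
  have hVd := hv.vf x hx
  have htr := hv.sub x hx hpos
  have hV0 : V x = 0 := by simp [hV, hg]
  let b := EuclideanSpace.basisFun (Fin N) ℝ
  have hA : ∃ i, 0 < inner ℝ (b i) (fderiv ℝ V x (b i)) := by
    by_contra hcon
    push Not at hcon
    rw [LinearMap.trace_eq_sum_inner _ b] at htr
    have h1 : ∑ i, inner ℝ (b i) (fderiv ℝ V x (b i)) ≤ 0 := Finset.sum_nonpos fun i _ => hcon i
    have h3 : 0 < m * v x ^ q := by positivity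
    exact absurd (h3.trans_le htr) (not_lt.2 h1)
  obtain ⟨i, hi⟩ := hA
  set e := b i with he
  set a := inner ℝ e (fderiv ℝ V x e) with ha
  have hne : ‖e‖ = 1 := b.orthonormal.1 i
  have hcont : Continuous (fun s : ℝ => x + s • e) := by fun_prop
  have hline : Tendsto (fun s : ℝ => x + s • e) (𝓝 0) (𝓝 x) := by simpa using hcont.tendsto 0
  have hd1 : HasDerivAt (fun s : ℝ => inner ℝ e (V (x + s • e))) a 0 := by
    have h1 : HasDerivAt (fun s : ℝ => x + s • e) e 0 := by
      simpa using ((hasDerivAt_id (0:ℝ)).smul_const e).const_add x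
    have hG' : HasFDerivAt V (fderiv ℝ V x) (x + (0:ℝ) • e) := by
      simpa using hVd.hasFDerivAt
    have h2 : HasDerivAt (fun s : ℝ => V (x + s • e)) (fderiv ℝ V x e) 0 := by
      have := HasFDerivAt.comp_hasDerivAt (f := fun s : ℝ => x + s • e) (0:ℝ) hG' h1
      exact this
    simpa using (hasDerivAt_const (0:ℝ) e).inner ℝ h2
  have hs1 := slope_lower hd1 (by simp [hV0]) hi
  have hsmall : ∀ᶠ s in 𝓝[>] (0:ℝ), ‖V (x + s • e)‖ < 1 := by
    have h1 : Tendsto (fun z => ‖V z‖) (𝓝 x) (𝓝 0) := by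
      have : Tendsto (fun z => ‖V z‖) (𝓝 x) (𝓝 ‖V x‖) := hVd.continuousAt.norm
      simpa [hV0] using this
    have h2 := (h1.comp hline).eventually (gt_mem_nhds (show (0:ℝ) < 1 by norm_num))
    exact h2.filter_mono nhdsWithin_le_nhds
  have hlow : ∀ᶠ s in 𝓝[>] (0:ℝ), a / 2 * s ≤ inner ℝ (gradient v (x + s • e)) e := by
    filter_upwards [hs1, hsmall, self_mem_nhdsWithin] with s h1 h2 h3
    have hs : (0:ℝ) < s := h3
    set g := gradient v (x + s • e) with hgs
    have hV' : V (x + s • e) = ‖g‖ ^ (p - 2) • g := rfl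
    rw [hV', inner_smul_right, real_inner_comm] at h1
    have hpos1 : 0 < ‖g‖ ^ (p - 2) * inner ℝ g e := lt_of_lt_of_le (by positivity) h1
    have hg0 : g ≠ 0 := by
      intro h0
      simp [h0] at hpos1
    rw [hV', pvf_norm g hg0] at h2
    have hgle : ‖g‖ ≤ 1 := by
      by_contra hcon
      push Not at hcon
      have := Real.one_lt_rpow hcon (show 0 < p - 1 by linarith)
      linarith
    have h4 : ‖g‖ ^ (p - 2) ≤ 1 := Real.rpow_le_one (norm_nonneg _) hgle (by linarith)
    have h5 : 0 < inner ℝ g e := pos_of_mul_pos_right hpos1 (by positivity)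
    nlinarith
  have hgrow := growth_of_deriv_ge (f := fun s : ℝ => v (x + s • e))
    (f' := fun s => inner ℝ (gradient v (x + s • e)) e)
    ((hline.eventually (hv.ev_diff hx)).mono fun s hs => line_hasDerivAt hs) hlow
  have hup : ∀ᶠ s in 𝓝[>] (0:ℝ), v (x + s • e) ≤ v x + c * (s ^ 2) ^ (j + 1) := by
    have := (hline.eventually hmax).filter_mono (nhdsWithin_le_nhds (s := Ioi (0:ℝ)))
    filter_upwards [this] with s hs
    have h1 : ‖x + s • e - x‖ ^ 2 = s ^ 2 := by
      rw [add_sub_cancel_left, norm_smul, hne, mul_one, Real.norm_eq_abs, sq_abs]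
    rwa [h1] at hs
  have hsm : ∀ᶠ s in 𝓝[>] (0:ℝ), c * (s ^ 2) ^ j < a / 4 := by
    have h1 : Continuous (fun s : ℝ => c * (s ^ 2) ^ j) := by fun_prop
    have h2 : Tendsto (fun s : ℝ => c * (s ^ 2) ^ j) (𝓝 0) (𝓝 0) := by
      have := h1.tendsto 0
      simpa [show j ≠ 0 by omega] using this
    exact (h2.eventually (gt_mem_nhds (show (0:ℝ) < a / 4 by positivity))).filter_mono
      nhdsWithin_le_nhds
  obtain ⟨s, ⟨⟨h1, h2⟩, h3⟩, h4⟩ := (((hgrow.and hup).and hsm).and self_mem_nhdsWithin).exists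
  have hs : (0:ℝ) < s := h4
  simp only [zero_smul, add_zero] at h1
  have h5 : c * (s ^ 2) ^ (j + 1) = c * (s ^ 2) ^ j * s ^ 2 := by ring
  have h6 : 0 < s ^ 2 := by positivity
  nlinarith

lemma nondeg (N : ℕ) {p q m : ℝ} (hp : 2 ≤ p) (hq0 : 0 ≤ q) (hq1 : q < 1) (hm : 0 < m) :
    ∃ c : ℝ, 0 < c ∧ ∃ j : ℕ, ∀ v : Euc N → ℝ, SliceSub N p q m v → ∀ x1 : Euc N, ∀ r : ℝ,
      0 < r → r ≤ 1 → closedBall x1 r ⊆ ball 0 1 → 0 < v x1 →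
      ∃ y ∈ closedBall x1 r, c * (r ^ 2) ^ (j + 1) ≤ v y := by
  obtain ⟨j, hj1, hjq⟩ : ∃ j : ℕ, 1 ≤ j ∧ ((j : ℝ) + 1) * q ≤ j := by
    obtain ⟨n, hn⟩ := exists_nat_ge (q / (1 - q))
    refine ⟨n + 1, by omega, ?_⟩
    rw [div_le_iff₀ (by linarith)] at hn
    push_cast
    nlinarith
  set D : ℝ := 2 * (j + 1) * (2 * j + 1) * (N + p) with hD
  have hDpos : 0 < D := by positivity
  obtain ⟨c, hcpos, hc1, hc2⟩ : ∃ c : ℝ, 0 < c ∧ 2 * c * (j + 1) ≤ 1 ∧ D * c < m * c ^ q := by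
    have h1 : Tendsto (fun c : ℝ => D * c ^ (1 - q)) (𝓝[>] 0) (𝓝 0) := by
      have h2 : ContinuousAt (fun c : ℝ => D * c ^ (1 - q)) 0 :=
        continuousAt_const.mul (Real.continuousAt_rpow_const _ _ (Or.inr (by linarith)))
      have h3 : Tendsto (fun c : ℝ => D * c ^ (1 - q)) (𝓝 0) (𝓝 (D * 0 ^ (1 - q))) := h2
      rw [Real.zero_rpow (by linarith), mul_zero] at h3
      exact h3.mono_left nhdsWithin_le_nhds
    have h4 := h1.eventually (gt_mem_nhds hm)
    have h5 : (0:ℝ) < 1 / (2 * (j + 1)) := by positivity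
    obtain ⟨c, ⟨hc, hc'⟩⟩ := (h4.and (Ioo_mem_nhdsGT h5)).exists
    refine ⟨c, hc'.1, ?_, ?_⟩
    · have := hc'.2.le
      rw [le_div_iff₀ (by positivity)] at this
      linarith
    · have h6 : c = c ^ (1 - q) * c ^ q := by
        rw [← Real.rpow_add hc'.1]; simp
      have h7 : 0 < c ^ q := Real.rpow_pos_of_pos hc'.1 q
      calc D * c = (D * c ^ (1 - q)) * c ^ q := by rw [mul_assoc D (c ^ (1 - q)), ← h6]
        _ < m * c ^ q := mul_lt_mul_of_pos_right hc h7
  refine ⟨c, hcpos, j, ?_⟩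
  intro v hv x1 r hr hr1 hsub hpos
  have hx1 : x1 ∈ closedBall x1 r := mem_closedBall_self hr.le
  obtain ⟨y, hyb, hy⟩ := (isCompact_closedBall x1 r).exists_isMaxOn ⟨x1, hx1⟩
    (f := fun z => v z - (c * (‖z - x1‖ ^ 2) ^ (j + 1) + inner ℝ (0 : Euc N) (z - x1)))
    ((hv.cont.mono hsub).sub (by fun_prop))
  have hyx := hy hx1
  simp only [sub_self, norm_zero, inner_zero_left, mem_ofPred_eq, add_zero] at hyx
  rw [zero_pow two_ne_zero, zero_pow (Nat.succ_ne_zero j), mul_zero, sub_zero] at hyx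
  refine ⟨y, hyb, ?_⟩
  by_cases hyint : y ∈ ball x1 r
  swap
  · have h1 : ‖y - x1‖ = r := by
      rw [mem_ball, dist_eq_norm, not_lt] at hyint
      rw [mem_closedBall, dist_eq_norm] at hyb
      exact le_antisymm hyb hyint
    rw [h1] at hyx
    linarith
  exfalso
  have hyb1 : y ∈ ball (0 : Euc N) 1 := hsub hyb
  have hnhds : closedBall x1 r ∈ 𝓝 y :=
    mem_of_superset (isOpen_ball.mem_nhds hyint) ball_subset_closedBall
  obtain ⟨hg1, hg2⟩ := barrier_touch hcpos.le (hv.ev_diff hyb1) (hy.isLocalMax hnhds)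
  rw [add_zero] at hg1
  have hbar : 0 ≤ c * (‖y - x1‖ ^ 2) ^ (j + 1) := by positivity
  have hvy : 0 < v y := by linarith
  by_cases hyx1 : y = x1
  · subst hyx1
    apply no_degenerate_touch hp hm hv hyb1 hvy (by rw [hg1]; simp) hj1 (c := c)
    filter_upwards [hnhds] with z hz
    have := hy hz
    simp only [sub_self, norm_zero, inner_zero_left, mem_ofPred_eq, add_zero] at this
    rw [zero_pow two_ne_zero, zero_pow (Nat.succ_ne_zero j), mul_zero, sub_zero] at this
    linarith
  set d := ‖y - x1‖ with hd
  have hdpos : 0 < d := norm_pos_iff.2 (sub_ne_zero.2 hyx1)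
  have hd1 : d ≤ 1 := by
    rw [mem_closedBall, dist_eq_norm] at hyb
    linarith
  have hdj : 0 < (d ^ 2) ^ j := by positivity
  have hdj1 : (d ^ 2) ^ j ≤ 1 := pow_le_one₀ (by positivity) (pow_le_one₀ hdpos.le hd1)
  have hgn : ‖gradient v y‖ = 2 * c * (j + 1) * (d ^ 2) ^ j * d := by
    rw [hg1, norm_smul, Real.norm_of_nonneg (by positivity)]
  have hgpos : 0 < ‖gradient v y‖ := by rw [hgn]; positivity
  have hg : gradient v y ≠ 0 := norm_pos_iff.1 hgpos
  have hgle : ‖gradient v y‖ ≤ 1 := by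
    rw [hgn]
    have h1 : (d ^ 2) ^ j * d ≤ 1 := mul_le_one₀ hdj1 hdpos.le hd1
    have h2 : 0 ≤ (d ^ 2) ^ j * d := by positivity
    calc 2 * c * (j + 1) * (d ^ 2) ^ j * d = (2 * c * (j + 1)) * ((d ^ 2) ^ j * d) := by ring
      _ ≤ 1 := mul_le_one₀ hc1 h2 h1
  have hGd := grad_differentiableAt hp (hv.vf y hyb1) hg
  have hneg := hg2 hGd
  set Λ : ℝ := 2 * c * (j + 1) * (2 * j + 1) * (d ^ 2) ^ j with hΛ
  have hΛpos : 0 < Λ := by positivity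
  have hsubs := hv.sub y hyb1 hvy
  rw [trace_formula (p := p) hGd.hasFDerivAt hg] at hsubs
  have htr : LinearMap.trace ℝ (Euc N) (fderiv ℝ (gradient v) y).toLinearMap ≤ N * Λ := by
    let b := EuclideanSpace.basisFun (Fin N) ℝ
    rw [LinearMap.trace_eq_sum_inner _ b]
    calc _ ≤ ∑ _i : Fin N, Λ := by
          apply Finset.sum_le_sum
          intro i _
          have h1 := hneg (b i)
          rw [b.orthonormal.1 i, one_pow, mul_one, real_inner_comm] at h1
          exact h1
      _ = N * Λ := by simp
  have h5 : inner ℝ (gradient v y) (fderiv ℝ (gradient v) y (gradient v y)) / ‖gradient v y‖ ^ 2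
      ≤ Λ := by
    rw [div_le_iff₀ (by positivity), real_inner_comm]
    exact hneg (gradient v y)
  have h6 := mul_le_mul_of_nonneg_left h5 (show 0 ≤ p - 2 by linarith)
  have h7 : ‖gradient v y‖ ^ (p - 2) ≤ 1 := Real.rpow_le_one (norm_nonneg _) hgle (by linarith)
  have h8 : 0 < ‖gradient v y‖ ^ (p - 2) := by positivity
  have h9 : m * v y ^ q ≤ (N + p) * Λ := by
    have h10 : (0:ℝ) ≤ (N + p) * Λ := by positivity
    refine hsubs.trans ?_
    calc _ ≤ ‖gradient v y‖ ^ (p - 2) * ((N + p) * Λ) := by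
          apply mul_le_mul_of_nonneg_left _ h8.le
          nlinarith
      _ ≤ 1 * ((N + p) * Λ) := mul_le_mul_of_nonneg_right h7 h10
      _ = _ := one_mul _
  have h10 : c ^ q * (d ^ 2) ^ j ≤ v y ^ q := by
    have h11 : (c * (d ^ 2) ^ (j + 1)) ^ q ≤ v y ^ q :=
      Real.rpow_le_rpow hbar (by linarith) hq0
    refine le_trans ?_ h11
    rw [Real.mul_rpow hcpos.le (by positivity)]
    apply mul_le_mul_of_nonneg_left _ (by positivity)
    rw [← Real.rpow_natCast (d ^ 2) j, ← Real.rpow_natCast (d ^ 2) (j + 1),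
      ← Real.rpow_mul (by positivity)]
    apply Real.rpow_le_rpow_of_exponent_ge (by positivity) (pow_le_one₀ hdpos.le hd1)
    push_cast
    exact hjq
  have h12 : m * (c ^ q * (d ^ 2) ^ j) ≤ (N + p) * Λ :=
    (mul_le_mul_of_nonneg_left h10 hm.le).trans h9
  have h13 : (N + p) * Λ = D * c * (d ^ 2) ^ j := by rw [hΛ, hD]; ring
  rw [h13, ← mul_assoc] at h12
  have := le_of_mul_le_mul_right h12 hdj
  linarith

/-! ### Decay at density points -/

lemma decay_step {N : ℕ} (hN : 1 ≤ N) {p q m : ℝ} (hp : 2 ≤ p) (hm : 0 < m) {v : Euc N → ℝ}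
    (hv : SliceSub N p q m v) {x : Euc N} (hx : x ∈ ball (0 : Euc N) (1 / 2)) (hx0 : v x = 0)
    {δ ε s S : ℝ} (hδ : 0 < δ) (hε : ε = δ ^ N / (2 * (8 * (N + p)) ^ N)) (hs : 0 < s) (hs1 : s < 1 / 4)
    (hdens : volume ((ball (0 : Euc N) 1 ∩ v ⁻¹' Ioi 0) ∩ closedBall x (2 * s)) ≤
      ENNReal.ofReal ε * volume (closedBall x (2 * s)))
    (hS : ∀ z ∈ closedBall x (2 * s), v z ≤ S) :
    ∀ z ∈ closedBall x s, v z ≤ δ * S := by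
  intro x1 hx1
  have hx' : ‖x‖ < 1 / 2 := mem_ball_zero_iff.1 hx
  have hbig : closedBall x (2 * s) ⊆ ball 0 1 := by
    intro z hz
    rw [mem_closedBall, dist_eq_norm] at hz
    rw [mem_ball_zero_iff]
    calc ‖z‖ = ‖(z - x) + x‖ := by rw [sub_add_cancel]
      _ ≤ ‖z - x‖ + ‖x‖ := norm_add_le _ _
      _ < 1 := by linarith
  have hin : closedBall x1 s ⊆ closedBall x (2 * s) := by
    apply closedBall_subset_closedBall'
    rw [mem_closedBall] at hx1
    linarith
  have hS0 : 0 ≤ S := by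
    rw [← hx0]; exact hS x (mem_closedBall_self (by linarith))
  by_cases ha : 0 < v x1
  swap
  · push Not at ha
    exact ha.trans (by positivity)
  have hE := abp hp hm hv hs (hin.trans hbig) (fun z hz => hS z (hin hz)) ha
  have hNp : (0:ℝ) < N + p := by positivity
  have hεpos : 0 < ε := by rw [hε]; positivity
  have h1 : volume (ball x1 s ∩ v ⁻¹' Ioi 0) ≤ ENNReal.ofReal ε * volume (closedBall x (2 * s)) := by
    refine le_trans (measure_mono ?_) hdens
    intro z hz
    have := hin (ball_subset_closedBall hz.1)
    exact ⟨⟨hbig this, hz.2⟩, this⟩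
  have h2 := hE.trans (mul_le_mul_right h1 _)
  rw [Measure.addHaar_ball_of_pos volume _ (by positivity), Measure.addHaar_closedBall volume _ (by positivity),
    finrank_euclideanSpace_fin, ← mul_assoc, ← mul_assoc, ← ENNReal.ofReal_mul (by positivity),
    ← ENNReal.ofReal_mul (by positivity)] at h2
  have hω0 : volume (ball (0 : Euc N) 1) ≠ 0 := (measure_ball_pos volume _ one_pos).ne'
  have hω1 : volume (ball (0 : Euc N) 1) ≠ ⊤ := measure_ball_lt_top.ne
  rw [ENNReal.mul_le_mul_iff_left hω0 hω1, ENNReal.ofReal_le_ofReal_iff (by positivity)] at h2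
  have h3 : v x1 ^ N ≤ (δ * S) ^ N := by
    have h4 : (v x1 / (2 * s)) ^ N * (2 * s) ^ N = v x1 ^ N := by
      rw [← mul_pow]; congr 1; field_simp
    have h5 : (2 * (2 * (S / s ^ 2) * (N + p)) ^ N * ε * (2 * s) ^ N) * (2 * s) ^ N = (δ * S) ^ N := by
      have h6 : (2 * (S / s ^ 2) * (N + p)) ^ N * (2 * s) ^ N * (2 * s) ^ N =
          (8 * (N + p)) ^ N * S ^ N := by
        rw [← mul_pow, ← mul_pow, ← mul_pow]; congr 1; field_simp; ring
      calc _ = 2 * ε * ((2 * (S / s ^ 2) * (N + p)) ^ N * (2 * s) ^ N * (2 * s) ^ N) := by ring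
        _ = (2 * ε * (8 * (N + p)) ^ N) * S ^ N := by rw [h6]; ring
        _ = δ ^ N * S ^ N := by
          congr 1
          rw [hε]; field_simp
        _ = _ := (mul_pow _ _ _).symm
    rw [← h4, ← h5]
    exact mul_le_mul_of_nonneg_right h2 (by positivity)
  exact le_of_pow_le_pow_left₀ (by omega) (by positivity) h3

lemma slice_null {N : ℕ} (hN : 1 ≤ N) {p q m : ℝ} (hp : 2 ≤ p) (hm : 0 < m) {v : Euc N → ℝ}
    (hv : SliceSub N p q m v) {c : ℝ} (hc : 0 < c) (j : ℕ) :
    volume {x : Euc N | x ∈ ball (0 : Euc N) (1 / 2) ∧ v x = 0 ∧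
      ∀ r : ℝ, 0 < r → r < 1 / 4 → ∃ y ∈ closedBall x r, c * (r ^ 2) ^ (j + 1) ≤ v y} = 0 := by
  rw [measure_eq_zero_iff_ae_notMem]
  have hPo : IsOpen (ball (0 : Euc N) 1 ∩ v ⁻¹' Ioi 0) :=
    hv.cont.isOpen_inter_preimage isOpen_ball isOpen_Ioi
  filter_upwards [Besicovitch.ae_tendsto_measure_inter_div_of_measurableSet volume
    hPo.measurableSet] with x hx
  rintro ⟨hxb, hx0, hnd⟩
  have hxP : x ∉ ball (0 : Euc N) 1 ∩ v ⁻¹' Ioi 0 := by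
    rintro ⟨_, h⟩
    have h' : 0 < v x := h
    linarith
  rw [indicator_of_notMem hxP] at hx
  set δ : ℝ := (1 / 4) ^ (j + 2) with hδ
  have hδpos : 0 < δ := by positivity
  set ε : ℝ := δ ^ N / (2 * (8 * (N + p)) ^ N) with hε
  have hεpos : 0 < ε := by positivity
  have h1 := hx.eventually (gt_mem_nhds (ENNReal.ofReal_pos.2 hεpos))
  obtain ⟨ρ, hρ, hρ'⟩ := mem_nhdsGT_iff_exists_Ioo_subset.1 h1
  have hρpos : (0:ℝ) < ρ := hρ
  set R : ℝ := min ρ (1 / 4) / 2 with hR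
  have hmin : 0 < min ρ (1 / 4) := lt_min hρpos (by norm_num)
  have hRpos : 0 < R := by positivity
  have hRρ : R < ρ := by have := min_le_left ρ (1 / 4); linarith
  have hR4 : R < 1 / 4 := by have := min_le_right ρ (1 / 4); linarith
  have hdens : ∀ s, 0 < s → s ≤ R →
      volume ((ball (0 : Euc N) 1 ∩ v ⁻¹' Ioi 0) ∩ closedBall x s) ≤
        ENNReal.ofReal ε * volume (closedBall x s) := by
    intro s hs hsR
    have h2 : volume ((ball (0 : Euc N) 1 ∩ v ⁻¹' Ioi 0) ∩ closedBall x s) / volume (closedBall x s)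
      < ENNReal.ofReal ε := hρ' ⟨hs, lt_of_le_of_lt hsR hRρ⟩
    rw [ENNReal.div_lt_iff (Or.inl (measure_closedBall_pos volume _ hs).ne')
      (Or.inl measure_closedBall_lt_top.ne)] at h2
    exact h2.le
  have hiter : ∀ i : ℕ, ∀ z ∈ closedBall x (R * (1 / 2) ^ i), v z ≤ δ ^ i := by
    intro i
    induction i with
    | zero =>
      intro z hz
      rw [pow_zero]
      apply hv.le_one
      rw [pow_zero, mul_one, mem_closedBall, dist_eq_norm] at hz
      have := mem_ball_zero_iff.1 hxb
      rw [mem_ball_zero_iff]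
      calc ‖z‖ = ‖(z - x) + x‖ := by rw [sub_add_cancel]
        _ ≤ ‖z - x‖ + ‖x‖ := norm_add_le _ _
        _ < 1 := by linarith
    | succ i ih =>
      have h3 : (2:ℝ) * (R * (1 / 2) ^ (i + 1)) = R * (1 / 2) ^ i := by rw [pow_succ]; ring
      have h4 : ((1:ℝ) / 2) ^ i ≤ 1 := pow_le_one₀ (by norm_num) (by norm_num)
      have h5 : R * (1 / 2) ^ i ≤ R := mul_le_of_le_one_right hRpos.le h4
      have h6 : 0 < R * (1 / 2) ^ i := by positivity
      rw [pow_succ' δ i]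
      refine decay_step hN hp hm hv hxb hx0 hδpos hε (by positivity) (by linarith) ?_ ?_
      · rw [h3]; exact hdens _ h6 h5
      · rw [h3]; exact ih
  have hcR : 0 < c * (R ^ 2) ^ (j + 1) := by positivity
  obtain ⟨i, hi⟩ := exists_pow_lt_of_lt_one hcR (show (1:ℝ) / 4 < 1 by norm_num)
  have h4 : ((1:ℝ) / 2) ^ i ≤ 1 := pow_le_one₀ (by norm_num) (by norm_num)
  have h5 : R * (1 / 2) ^ i ≤ R := mul_le_of_le_one_right hRpos.le h4
  obtain ⟨y, hy, hy'⟩ := hnd (R * (1 / 2) ^ i) (by positivity) (by linarith)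
  have h6 := hy'.trans (hiter i y hy)
  have h7 : ((R * (1 / 2) ^ i) ^ 2) ^ (j + 1) = (R ^ 2) ^ (j + 1) * ((1 / 4) ^ i) ^ (j + 1) := by
    rw [mul_pow, mul_pow]
    congr 2
    rw [← pow_mul, mul_comm i 2, pow_mul]; norm_num
  have h8 : δ ^ i = (1 / 4) ^ i * ((1 / 4) ^ i) ^ (j + 1) := by
    rw [hδ, ← pow_mul, ← pow_mul, ← pow_add]; congr 1; ring
  rw [h7, h8, ← mul_assoc] at h6
  have h9 := le_of_mul_le_mul_right h6 (by positivity)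
  linarith

lemma mem_cyl_one {N : ℕ} {θ : ℝ} {z : Euc N × ℝ} :
    z ∈ cylQ N θ 1 (0, 0) ↔ z.1 ∈ ball (0 : Euc N) 1 ∧ z.2 ∈ Ioo (-1 : ℝ) 1 := by
  simp [cylQ, mem_prod]

lemma isOpen_cyl {N : ℕ} {θ r : ℝ} {z : Euc N × ℝ} : IsOpen (cylQ N θ r z) :=
  isOpen_ball.prod isOpen_Ioo

lemma slice_of_memJ {N : ℕ} {p q m M : ℝ} {u : Euc N × ℝ → ℝ} (hu : memJ N p q m M u) {t : ℝ}
    (ht : t ∈ Ioo (-1 : ℝ) 1) : SliceSub N p q m (fun y => u (y, t)) := by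
  obtain ⟨lam, hlam, ⟨hcont, hsol⟩, hbd, htd, -⟩ := hu
  have hmem : ∀ y ∈ ball (0 : Euc N) 1, (y, t) ∈ cylQ N (thetaV p q) 1 (0, 0) :=
    fun y hy => mem_cyl_one.2 ⟨hy, ht⟩
  refine ⟨?_, ?_, ?_, ?_, ?_, ?_⟩
  · exact hcont.comp (by fun_prop) hmem
  · intro y hy; exact (hsol _ (hmem y hy)).1
  · intro y hy; exact (hsol _ (hmem y hy)).2.2.1
  · intro y hy hpos
    have h1 := (hsol _ (hmem y hy)).2.2.2
    have h2 := htd _ (hmem y hy)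
    have h3 := (hlam _ (hmem y hy)).1
    have h4 : plusPowQ q (u (y, t)) = (u (y, t)) ^ q := by
      simp only [plusPowQ]
      rw [if_pos hpos, max_eq_left hpos.le]
    rw [h4] at h1
    have h5 : 0 ≤ u (y, t) ^ q := Real.rpow_nonneg hpos.le q
    have h6 := mul_le_mul_of_nonneg_right h3 h5
    have h7 : m * u (y, t) ^ q ≤ pLap N p u (y, t) := by linarith
    exact h7
  · intro y hy; exact (hbd _ (hmem y hy)).1
  · intro y hy; exact (hbd _ (hmem y hy)).2

/-- **Remark after Corollary 4.1.** The free boundary `∂{u>0} ∩ Q_{1/2}` has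
`(N+1)`-dimensional Lebesgue measure zero. -/
theorem free_boundary_measure_zero
    (N : ℕ) (hN : 1 ≤ N) (p q m M : ℝ)
    (hp : 2 ≤ p) (hq0 : 0 ≤ q) (hq1 : q < 1) (hm : 0 < m) (hmM : m ≤ M) :
    ∀ u : Euc N × ℝ → ℝ, memJ N p q m M u →
      volume (frontier {z ∈ cylQ N (thetaV p q) 1 (0, 0) | 0 < u z} ∩
        cylQ N (thetaV p q) (1 / 2) (0, 0)) = 0 := by
  intro u hu
  obtain ⟨c, hc, j, hnd⟩ := nondeg N hp hq0 hq1 hm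
  have hθ : 0 ≤ thetaV p q := by
    unfold thetaV
    exact div_nonneg (mul_nonneg (by linarith) (by linarith)) (by linarith)
  have hhalf : (1 / 2 : ℝ) ^ thetaV p q ≤ 1 :=
    Real.rpow_le_one (by norm_num) (by norm_num) hθ
  have hcont : ContinuousOn u (cylQ N (thetaV p q) 1 (0, 0)) := by
    obtain ⟨lam, -, ⟨hcont, -⟩, -⟩ := hu
    exact hcont
  have hnn : ∀ z ∈ cylQ N (thetaV p q) 1 (0, 0), 0 ≤ u z := by
    obtain ⟨lam, -, -, hbd, -⟩ := hu
    exact fun z hz => (hbd z hz).1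
  set A := {z ∈ cylQ N (thetaV p q) 1 (0, 0) | 0 < u z} with hA
  have hAo : IsOpen A := hcont.isOpen_inter_preimage isOpen_cyl isOpen_Ioi
  have hTm : MeasurableSet (frontier A ∩ cylQ N (thetaV p q) (1 / 2) (0, 0)) :=
    isClosed_frontier.measurableSet.inter isOpen_cyl.measurableSet
  rw [Measure.volume_eq_prod, Measure.prod_apply_symm hTm]
  rw [lintegral_eq_zero_iff' (measurable_measure_prodMk_right hTm).aemeasurable]
  refine Eventually.of_forall fun t => ?_
  simp only [Pi.zero_apply]
  by_cases ht : t ∈ Ioo (-1 : ℝ) 1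
  swap
  · convert measure_empty (μ := (volume : Measure (Euc N)))
    rw [eq_empty_iff_forall_notMem]
    intro x hx
    have h1 : (x, t) ∈ cylQ N (thetaV p q) (1 / 2) (0, 0) := hx.2
    have h2 := h1.2
    apply ht
    simp only [zero_sub, zero_add, mem_Ioo] at h2
    exact ⟨by linarith [h2.1], by linarith [h2.2]⟩
  refine measure_mono_null ?_ (slice_null hN hp hm (slice_of_memJ hu ht) hc j)
  intro x hx
  have hxf : (x, t) ∈ frontier A := hx.1
  have hxb : x ∈ ball (0 : Euc N) (1 / 2) := hx.2.1
  have hxb1 : x ∈ ball (0 : Euc N) 1 := ball_subset_ball (by norm_num) hxb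
  have hxQ : (x, t) ∈ cylQ N (thetaV p q) 1 (0, 0) := mem_cyl_one.2 ⟨hxb1, ht⟩
  rw [hAo.frontier_eq] at hxf
  refine ⟨hxb, ?_, ?_⟩
  · refine le_antisymm ?_ (hnn _ hxQ)
    by_contra hcon
    push Not at hcon
    exact hxf.2 ⟨hxQ, hcon⟩
  intro r hr hr4
  obtain ⟨z, hzA, hz⟩ := mem_closure_iff_seq_limit.1 hxf.1
  have hz1 : Tendsto (fun n => (z n).1) atTop (𝓝 x) := (continuous_fst.tendsto (x, t)).comp hz
  have hz2 : Tendsto (fun n => (z n).2) atTop (𝓝 t) := (continuous_snd.tendsto (x, t)).comp hz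
  obtain ⟨n0, hn0⟩ := eventually_atTop.1 (hz1.eventually (isOpen_ball.mem_nhds hxb))
  have hex : ∀ n, ∃ y ∈ closedBall (z (n + n0)).1 r, c * (r ^ 2) ^ (j + 1) ≤ u (y, (z (n + n0)).2) := by
    intro n
    have hq := mem_cyl_one.1 (hzA (n + n0)).1
    have hpos : 0 < u ((z (n + n0)).1, (z (n + n0)).2) := (hzA (n + n0)).2
    refine hnd _ (slice_of_memJ hu hq.2) _ r hr (by linarith) ?_ hpos
    intro w hw
    have h1 := mem_ball_zero_iff.1 (hn0 (n + n0) (by omega))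
    rw [mem_closedBall, dist_eq_norm] at hw
    rw [mem_ball_zero_iff]
    calc ‖w‖ = ‖(w - (z (n + n0)).1) + (z (n + n0)).1‖ := by rw [sub_add_cancel]
      _ ≤ ‖w - (z (n + n0)).1‖ + ‖(z (n + n0)).1‖ := norm_add_le _ _
      _ < 1 := by linarith
  choose y hy1 hy2 using hex
  have hyc : ∀ n, y n ∈ closedBall (0 : Euc N) (3 / 4) := by
    intro n
    have h1 := mem_ball_zero_iff.1 (hn0 (n + n0) (by omega))
    have hw := hy1 n
    rw [mem_closedBall, dist_eq_norm] at hw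
    rw [mem_closedBall_zero_iff]
    calc ‖y n‖ = ‖(y n - (z (n + n0)).1) + (z (n + n0)).1‖ := by rw [sub_add_cancel]
      _ ≤ ‖y n - (z (n + n0)).1‖ + ‖(z (n + n0)).1‖ := norm_add_le _ _
      _ ≤ 3 / 4 := by linarith
  obtain ⟨y0, hy0, φ, hφ, hlim⟩ := (isCompact_closedBall (0 : Euc N) (3 / 4)).tendsto_subseq hyc
  have hsh : Tendsto (fun n => φ n + n0) atTop atTop :=
    (tendsto_add_atTop_nat n0).comp hφ.tendsto_atTop
  have hz1' : Tendsto (fun n => (z (φ n + n0)).1) atTop (𝓝 x) := hz1.comp hsh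
  have hz2' : Tendsto (fun n => (z (φ n + n0)).2) atTop (𝓝 t) := hz2.comp hsh
  refine ⟨y0, ?_, ?_⟩
  · exact le_of_tendsto (hlim.dist hz1') (Eventually.of_forall fun n => hy1 (φ n))
  · have hyQ : (y0, t) ∈ cylQ N (thetaV p q) 1 (0, 0) :=
      mem_cyl_one.2 ⟨closedBall_subset_ball (by norm_num) hy0, ht⟩
    have hca : ContinuousAt u (y0, t) := hcont.continuousAt (isOpen_cyl.mem_nhds hyQ)
    have hpair : Tendsto (fun n => (y (φ n), (z (φ n + n0)).2)) atTop (𝓝 (y0, t)) :=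
      hlim.prodMk_nhds hz2'
    exact ge_of_tendsto (hca.tendsto.comp hpair) (Eventually.of_forall fun n => hy2 (φ n))
end
end
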